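/- Tracked charged curves obey the Lorentz force law (flat-space version of the Corollary to the Lorentz-force theorem): under the hypotheses of the charged tracking theorem—F : ℝ⁴ → Matrix (Fin 4) (Fin 4) ℝ smooth with antisymmetric values; γ : ℝ → ℝ⁴ smooth with η(γ'(t), γ'(t)) = 1 and γ'(t) future timelike for all t; κ ≥ 0; 𝒞 a collection of pairs (T, J) of smooth fields with T symmetric-valued satisfying the dominant energy condition everywhere, Σₐ ∂J a/∂p a = 0, Σ_b ∂T a b/∂p b (p) = Σ_b (E * F(p)) a b * J(p) b for all p and a, and |Σₐ J(p) a * t a| ≤ κ * Σₐ Σ_b T(p) a b * t a * t b for every p and every unit timelike t; and {T : (T,J) ∈ 𝒞} tracks γ—there exists a real κ' with |κ'| ≤ κ such that for every t ∈ ℝ and every index a, γ''(t) a = κ' * Σ_b (E * F(γ(t))) a b * γ'(t) b. -/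

import Mathlib

open Matrix MeasureTheory Filter Topology

noncomputable section

abbrev Vec4 : Type := Fin 4 → ℝ
abbrev Mat4 : Type := Matrix (Fin 4) (Fin 4) ℝ

/-- The Minkowski inner product on ℝ⁴. -/
def mink (x y : Vec4) : ℝ := x 0 * y 0 - x 1 * y 1 - x 2 * y 2 - x 3 * y 3

/-- The matrix diag(1,-1,-1,-1). -/
def E : Mat4 := Matrix.diagonal ![1, -1, -1, -1]

def FutureCausal (x : Vec4) : Prop := 0 ≤ mink x x ∧ 0 ≤ x 0
def FutureTimelike (x : Vec4) : Prop := 0 < mink x x ∧ 0 < x 0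
def FutureNull (x : Vec4) : Prop := x ≠ 0 ∧ mink x x = 0 ∧ 0 < x 0
def UnitTimelike (x : Vec4) : Prop := FutureTimelike x ∧ mink x x = 1

/-- The dominant energy condition for a matrix. -/
def DEC (T : Mat4) : Prop :=
  ∀ ξ ζ : Vec4, FutureCausal ξ → FutureCausal ζ → 0 ≤ ∑ i, ∑ j, ξ i * T i j * ζ j

/-- ⟨T, x⟩ = Σᵢⱼ T i j * x i j. -/
def minner (T x : Mat4) : ℝ := ∑ i, ∑ j, T i j * x i j

/-- The cone D of finite sums of symmetrized products of future causal vectors. -/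
def coneD : Set Mat4 :=
  { x | ∃ (n : ℕ) (ξ ζ : Fin n → Vec4),
      (∀ k, FutureCausal (ξ k)) ∧ (∀ k, FutureCausal (ζ k)) ∧
      x = ∑ k, (1/2 : ℝ) • (vecMulVec (ξ k) (ζ k) + vecMulVec (ζ k) (ξ k)) }

/-- A symmetric matrix is generic if it lies in the interior of D, taken within
the space of symmetric matrices. -/
def Generic (x : Mat4) : Prop :=
  ∃ h : xᵀ = x, (⟨x, h⟩ : { A : Mat4 // Aᵀ = A }) ∈
    interior { A : { A : Mat4 // Aᵀ = A } | A.val ∈ coneD }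

/-- Partial derivative in the a-th coordinate direction. -/
def pd (a : Fin 4) (f : Vec4 → ℝ) (p : Vec4) : ℝ := fderiv ℝ f p (Pi.single a 1)

def SmoothMatField (T : Vec4 → Mat4) : Prop := ∀ a b, ContDiff ℝ (⊤ : ℕ∞) fun p => T p a b
def SymValued (T : Vec4 → Mat4) : Prop := ∀ p, (T p)ᵀ = T p
def DivFree (T : Vec4 → Mat4) : Prop := ∀ p b, ∑ a, pd a (fun q => T q a b) p = 0

/-- A collection of fields tracks a curve. -/
def Tracks (C : Set (Vec4 → Mat4)) (γ : ℝ → Vec4) : Prop :=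
  ∀ x : Vec4 → Mat4, SmoothMatField x → HasCompactSupport x → SymValued x →
    (∃ O : Set Vec4, IsOpen O ∧ Set.range γ ⊆ O ∧ ∀ p ∈ O, x p ∈ coneD) →
    (∃ t₀ : ℝ, Generic (x (γ t₀))) →
    ∃ T ∈ C, 0 < ∫ p, minner (T p) (x p)

/-- Maxwell stress-energy tensor of a field strength matrix. -/
def maxwellT (F : Mat4) : Mat4 :=
  F * E * F - ((1/4 : ℝ) * (E * F * E * F).trace) • E

/-- Source-free Maxwell equations. -/
def SolvesMaxwell (F : Vec4 → Mat4) : Prop :=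
  (∀ p b, ∑ a, E a a * pd a (fun q => F q a b) p = 0) ∧
  (∀ p a b c, pd a (fun q => F q b c) p + pd b (fun q => F q c a) p
      + pd c (fun q => F q a b) p = 0)

/-- Klein–Gordon stress-energy tensor. -/
def kgT (φ : Vec4 → ℝ) (m : ℝ) (p : Vec4) : Mat4 :=
  Matrix.of fun a b =>
    pd a φ p * pd b φ p
      - (1/2 : ℝ) * E a b * ((∑ c, E c c * (pd c φ p)^2) - m^2 * (φ p)^2)

/-- Mass-m Klein–Gordon equation. -/
def SolvesKG (φ : Vec4 → ℝ) (m : ℝ) : Prop :=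
  ∀ p, pd 0 (pd 0 φ) p - pd 1 (pd 1 φ) p - pd 2 (pd 2 φ) p - pd 3 (pd 3 φ) p
    + m^2 * φ p = 0

/-!
Parametrise the curve by coordinate time. Test the tracking hypothesis with `β - χ`, where `β` is a
bump around one point of the curve and `χ` vanishes near the curve: after rescaling, this produces
matter whose energy in `β` is one while its energy in `χ` is at most one. Letting `χ` grow gives a
family whose energy concentrates on the curve. The dominant energy condition bounds every component
of stress and current by the energy density, so energy obeys a transport inequality along the curve;
by Grönwall it stays locally bounded, and along an ultrafilter the matter has a weak limit, a
distribution on the curve.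

Testing the conservation laws of the limit against functions that vanish on the curve shows that its
stress is `m u ⊗ u` and its current is `q u`, with `u` the four-velocity and densities taken in
proper time. Conservation of charge makes `q` constant; contracting the force balance with `u` kills
the Lorentz force and makes `m` constant. The force balance then reads `m u' = q E F u`, and
`|q| ≤ κ m` is the limit of the bounds on the charge-to-mass ratio.
-/

open scoped ContDiff

/-! ### Test functions and distributions on the line -/

section TestFunctions

variable {V : Type*} [NormedAddCommGroup V] [NormedSpace ℝ V]

/-- Test functions: smooth real-valued functions of compact support. -/
structure IsTest (φ : V → ℝ) : Prop where
  contDiff : ContDiff ℝ ∞ φ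
  hasCompactSupport : HasCompactSupport φ

namespace IsTest

variable {φ ψ : V → ℝ}

lemma continuous (hφ : IsTest φ) : Continuous φ := hφ.contDiff.continuous

lemma zero : IsTest (0 : V → ℝ) := ⟨contDiff_const, HasCompactSupport.zero⟩

lemma add (hφ : IsTest φ) (hψ : IsTest ψ) : IsTest (φ + ψ) :=
  ⟨hφ.contDiff.add hψ.contDiff, hφ.hasCompactSupport.add hψ.hasCompactSupport⟩

lemma mul_left {g : V → ℝ} (hg : ContDiff ℝ ∞ g) (hφ : IsTest φ) : IsTest (g * φ) :=
  ⟨hg.mul hφ.contDiff, hφ.hasCompactSupport.mul_left⟩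

lemma const_smul (c : ℝ) (hφ : IsTest φ) : IsTest (c • φ) :=
  mul_left (g := fun _ => c) contDiff_const hφ

lemma sub (hφ : IsTest φ) (hψ : IsTest ψ) : IsTest (φ - ψ) := by
  simpa only [neg_one_smul, sub_eq_add_neg] using hφ.add (hψ.const_smul (-1))

lemma integrable [MeasurableSpace V] [OpensMeasurableSpace V] {μ : Measure V}
    [IsFiniteMeasureOnCompacts μ] (hφ : IsTest φ) : Integrable φ μ :=
  hφ.continuous.integrable_of_hasCompactSupport hφ.hasCompactSupport

lemma deriv {φ : ℝ → ℝ} (hφ : IsTest φ) : IsTest (deriv φ) :=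
  ⟨(contDiff_infty_iff_deriv.1 hφ.contDiff).2, hφ.hasCompactSupport.deriv⟩

end IsTest

variable (V) in
/-- The space of test functions, as a subspace of the space of all real functions. -/
def testFunctions : Submodule ℝ (V → ℝ) where
  carrier := {φ | IsTest φ}
  zero_mem' := IsTest.zero
  add_mem' := IsTest.add
  smul_mem' := fun c _ => IsTest.const_smul c

end TestFunctions

lemma IsTest.exists_deriv_eq {φ : ℝ → ℝ} (hφ : IsTest φ) (hint : ∫ x, φ x = 0) :
    ∃ Φ : ℝ → ℝ, IsTest Φ ∧ _root_.deriv Φ = φ := by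
  obtain ⟨R, hR⟩ := hφ.hasCompactSupport.isCompact.isBounded.subset_ball 0
  have hsupp : Function.support φ ⊆ Set.Ioo (-R) R := by
    simpa [Real.ball_eq_Ioo] using (subset_tsupport φ).trans hR
  let Φ : ℝ → ℝ := fun r => ∫ x in (-R)..r, φ x
  have hderiv : ∀ r, HasDerivAt Φ (φ r) r := fun r =>
    intervalIntegral.integral_hasDerivAt_right (hφ.continuous.intervalIntegrable _ _)
      (hφ.continuous.stronglyMeasurableAtFilter _ _) hφ.continuous.continuousAt
  have hΦ : _root_.deriv Φ = φ := funext fun r => (hderiv r).deriv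
  refine ⟨Φ, ⟨contDiff_infty_iff_deriv.2 ⟨fun r => (hderiv r).differentiableAt, ?_⟩, ?_⟩, hΦ⟩
  · exact hΦ ▸ hφ.contDiff
  refine HasCompactSupport.intro (isCompact_Icc (a := -R) (b := R)) fun r hr => ?_
  rcases lt_or_ge r (-R) with hlt | hge
  · refine intervalIntegral.integral_zero_ae (.of_forall fun x hx => ?_)
    rw [Set.uIoc_of_ge hlt.le] at hx
    exact Function.notMem_support.1 fun h => (hsupp h).1.not_ge hx.2
  · have hle : R ≤ r := le_of_not_ge fun h => hr ⟨hge, h⟩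
    rw [← hint]
    exact intervalIntegral.integral_eq_integral_of_support_subset
      (hsupp.trans fun x hx => ⟨hx.1, hx.2.le.trans hle⟩)

lemma exists_eq_const_mul_integral (Λ : (ℝ → ℝ) →ₗ[ℝ] ℝ)
    (hΛ : ∀ φ, IsTest φ → Λ (deriv φ) = 0) :
    ∃ c, ∀ φ, IsTest φ → Λ φ = c * ∫ x, φ x := by
  let b : ContDiffBump (0 : ℝ) := default
  have hb : IsTest b := ⟨b.contDiff, b.hasCompactSupport⟩
  refine ⟨Λ b / ∫ x, b x, fun φ hφ => ?_⟩
  have hb0 : ∫ x, b x ≠ 0 := b.integral_pos.ne'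
  have hint : ∫ x, (φ - ((∫ x, φ x) / ∫ x, b x) • ⇑b) x = 0 := by
    rw [integral_sub' hφ.integrable (hb.const_smul _).integrable]
    simp only [Pi.smul_apply, smul_eq_mul, integral_const_mul]
    rw [div_mul_cancel₀ _ hb0, sub_self]
  obtain ⟨Φ, hΦ, hderiv⟩ := (hφ.sub (hb.const_smul _)).exists_deriv_eq hint
  have hzero := hΛ Φ hΦ
  rw [hderiv, map_sub, map_smul, smul_eq_mul, sub_eq_zero] at hzero
  rw [hzero]
  ring

lemma deriv_eq_of_forall_integral_eq_zero {u g : ℝ → ℝ} (hu : ContDiff ℝ 1 u) (hg : Continuous g)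
    (h : ∀ φ, IsTest φ → ∫ t, (u t * deriv φ t + g t * φ t) = 0) : deriv u = g := by
  have hu' : Continuous (deriv u) := hu.continuous_deriv le_rfl
  have hweak : ∀ φ : ℝ → ℝ, ContDiff ℝ ∞ φ → HasCompactSupport φ →
      ∫ t, φ t • (g t - deriv u t) = 0 := by
    intro φ hφ hsupp
    have htest : IsTest φ := ⟨hφ, hsupp⟩
    have hprod {v w : ℝ → ℝ} (hv : Continuous v) (hw : IsTest w) :
        Integrable (fun t => v t * w t) :=
      (hv.mul hw.continuous).integrable_of_hasCompactSupport hw.hasCompactSupport.mul_left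
    have hparts : ∫ t, u t * deriv φ t = - ∫ t, deriv u t * φ t :=
      integral_mul_deriv_eq_deriv_mul_of_integrable
        (fun t _ => (hu.differentiable one_ne_zero t).hasDerivAt)
        (fun t _ => (hφ.differentiable (by simp) t).hasDerivAt)
        (hprod hu.continuous htest.deriv) (hprod hu' htest) (hprod hu.continuous htest)
    have hsum := h φ htest
    rw [integral_add (hprod hu.continuous htest.deriv) (hprod hg htest), hparts] at hsum
    simp only [smul_eq_mul, mul_comm (φ _), sub_mul]
    rw [integral_sub (hprod hg htest) (hprod hu' htest)]
    linarith
  have hae := ae_eq_zero_of_integral_contDiff_smul_eq_zero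
    (hg.sub hu').locallyIntegrable hweak
  have hzero : (fun t => g t - deriv u t) = fun _ => 0 :=
    (Continuous.ae_eq_iff_eq volume (hg.sub hu') continuous_const).1 hae
  exact funext fun t => (sub_eq_zero.1 (congrFun hzero t)).symm

/-! ### Weak limits and concentration of densities -/

lemma exists_linearMap_tendsto {ι W : Type*} [AddCommGroup W] [Module ℝ W] (𝒰 : Ultrafilter ι)
    {S : Submodule ℝ W} {L : ι → S →ₗ[ℝ] ℝ} (hL : ∀ v, ∃ M, ∀ᶠ n in 𝒰, |L n v| ≤ M) :
    ∃ Λ : W →ₗ[ℝ] ℝ, ∀ v : S, Tendsto (fun n => L n v) 𝒰 (𝓝 (Λ v)) := by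
  have hlim : ∀ v, ∃ a, Tendsto (fun n => L n v) 𝒰 (𝓝 a) := fun v => by
    obtain ⟨M, hM⟩ := hL v
    obtain ⟨a, -, ha⟩ := (isCompact_Icc (a := -M) (b := M)).ultrafilter_le_nhds
      (𝒰.map fun n => L n v) (le_principal_iff.2 (hM.mono fun n hn => abs_le.1 hn))
    exact ⟨a, ha⟩
  choose lim hlim using hlim
  let Λ₀ : S →ₗ[ℝ] ℝ :=
    { toFun := lim
      map_add' := fun v w => tendsto_nhds_unique (hlim (v + w))
        (((hlim v).add (hlim w)).congr fun n => (map_add (L n) v w).symm)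
      map_smul' := fun c v => tendsto_nhds_unique (hlim (c • v))
        (((hlim v).const_mul c).congr fun n => (map_smul (L n) c v).symm) }
  obtain ⟨Λ, hΛ⟩ := Λ₀.exists_extend
  exact ⟨Λ, fun v => (LinearMap.congr_fun hΛ v : Λ v = lim v) ▸ hlim v⟩

lemma exists_isTest_eq_one {V : Type*} [NormedAddCommGroup V] [NormedSpace ℝ V]
    [FiniteDimensional ℝ V] {K U : Set V} (hK : IsCompact K) (hU : IsOpen U) (hKU : K ⊆ U) :
    ∃ χ : V → ℝ, IsTest χ ∧ tsupport χ ⊆ U ∧ (∀ x, 0 ≤ χ x) ∧ ∀ x ∈ K, χ x = 1 := by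
  have := FiniteDimensional.proper ℝ V
  obtain ⟨W, hW, hKW, hWU, hWc⟩ := exists_open_between_and_isCompact_closure hK hU hKU
  obtain ⟨f, hf0, hf1, hf⟩ := exists_contMDiffMap_zero_one_of_isClosed (n := ⊤)
    (modelWithCornersSelf ℝ V) hW.isClosed_compl hK.isClosed
    (Set.disjoint_compl_left_iff_subset.2 hKW)
  have hsupp : tsupport f ⊆ closure W :=
    closure_mono fun x hx => by_contra fun hxW => hx (hf0 hxW)
  have hfc : HasCompactSupport f := hWc.of_isClosed_subset (isClosed_tsupport _) hsupp
  exact ⟨f, ⟨contMDiff_iff_contDiff.1 f.contMDiff, hfc⟩, hsupp.trans hWU, fun x => (hf x).1, hf1⟩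

lemma exists_isTest_abs_le {V : Type*} [NormedAddCommGroup V] [NormedSpace ℝ V]
    [FiniteDimensional ℝ V] {ψ : V → ℝ} (hψ : Continuous ψ) (hψc : HasCompactSupport ψ)
    {U : Set V} (hU : IsOpen U) (hψU : tsupport ψ ⊆ U) :
    ∃ χ : V → ℝ, IsTest χ ∧ tsupport χ ⊆ U ∧ ∀ x, |ψ x| ≤ χ x := by
  obtain ⟨χ, hχ, hχU, hχ0, hχ1⟩ := exists_isTest_eq_one hψc.isCompact hU hψU
  obtain ⟨A, hA⟩ := hψc.exists_bound_of_continuous hψ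
  refine ⟨A • χ, hχ.const_smul A,
    (closure_mono (Function.support_const_smul_subset _ _)).trans hχU, fun x => ?_⟩
  by_cases hx : x ∈ tsupport ψ
  · simpa only [Pi.smul_apply, smul_eq_mul, hχ1 x hx, mul_one, Real.norm_eq_abs] using hA x
  · rw [image_eq_zero_of_notMem_tsupport hx, abs_zero]
    exact mul_nonneg ((norm_nonneg _).trans (hA x)) (hχ0 x)

lemma abs_le_max_sub_sq_add_mul_sqrt {ε : ℝ} (hε : 0 ≤ ε) (y : ℝ) :
    |y| ≤ |max (|y| - ε ^ 2) 0| + ε * √|y| := by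
  rw [abs_of_nonneg (le_max_right (|y| - ε ^ 2) 0)]
  have hsq := Real.sq_sqrt (abs_nonneg y)
  rcases le_total (√|y|) ε with h | h
  · nlinarith [le_max_right (|y| - ε ^ 2) 0, Real.sqrt_nonneg |y|]
  · nlinarith [le_max_left (|y| - ε ^ 2) 0]

lemma disjoint_tsupport_max_sub {X : Type*} [TopologicalSpace X] {ψ : X → ℝ} (hψ : Continuous ψ)
    {Γ : Set X} {ε : ℝ} (hε : 0 < ε) (h0 : ∀ x ∈ Γ, ψ x = 0) :
    Disjoint (tsupport fun x => max (|ψ x| - ε) 0) Γ := by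
  have hsub : tsupport (fun x => max (|ψ x| - ε) 0) ⊆ {x | ε ≤ |ψ x|} :=
    closure_minimal (fun x hx => le_of_not_gt fun hlt => hx (max_eq_right (sub_nonpos.2 hlt.le)))
      (isClosed_le continuous_const hψ.abs)
  refine Set.disjoint_left.2 fun x hx hxΓ => hε.not_ge ?_
  simpa only [Set.mem_ofPred_eq, h0 x hxΓ, abs_zero] using hsub hx

section Densities

variable {X : Type*} [TopologicalSpace X] [MeasurableSpace X] [OpensMeasurableSpace X]
  {μ : Measure X} [IsFiniteMeasureOnCompacts μ]

lemma integrable_mul_of_hasCompactSupport {f ψ : X → ℝ} (hf : Continuous f) (hψ : Continuous ψ)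
    (hψc : HasCompactSupport ψ) : Integrable (fun x => f x * ψ x) μ :=
  (hf.mul hψ).integrable_of_hasCompactSupport hψc.mul_left

lemma integral_mul_mono_of_hasCompactSupport {ρ φ ψ : X → ℝ} (hρ : Continuous ρ)
    (hρ0 : ∀ x, 0 ≤ ρ x) (hφ : Continuous φ) (hφc : HasCompactSupport φ) (hψ : Continuous ψ)
    (hψc : HasCompactSupport ψ) (h : ∀ x, φ x ≤ ψ x) :
    ∫ x, ρ x * φ x ∂μ ≤ ∫ x, ρ x * ψ x ∂μ :=
  integral_mono (integrable_mul_of_hasCompactSupport hρ hφ hφc)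
    (integrable_mul_of_hasCompactSupport hρ hψ hψc)
    fun x => mul_le_mul_of_nonneg_left (h x) (hρ0 x)

lemma abs_integral_mul_le_of_abs_le {σ ρ ψ : X → ℝ} {c : ℝ} (hσ : Continuous σ) (hρ : Continuous ρ)
    (h : ∀ x, |σ x| ≤ c * ρ x) (hψ : Continuous ψ) (hψc : HasCompactSupport ψ) :
    |∫ x, σ x * ψ x ∂μ| ≤ c * ∫ x, ρ x * |ψ x| ∂μ := by
  rw [← integral_const_mul]
  refine (abs_integral_le_integral_abs (f := fun x => σ x * ψ x)).trans
    (integral_mono (integrable_mul_of_hasCompactSupport hσ hψ hψc).abs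
      ((integrable_mul_of_hasCompactSupport hρ hψ.abs hψc.abs).const_mul c) fun x => ?_)
  simp only [abs_mul, ← mul_assoc]
  exact mul_le_mul_of_nonneg_right (h x) (abs_nonneg _)

variable {ι : Type*} {l : Filter ι} {ρ : ι → X → ℝ}

/-- Along `l`, the densities `ρ i` have bounded mass on every compact set; the bound is phrased by
integrating against continuous functions of compact support. -/
def LocallyBoundedMass (μ : Measure X) (l : Filter ι) (ρ : ι → X → ℝ) : Prop :=
  ∀ ψ : X → ℝ, Continuous ψ → HasCompactSupport ψ → ∃ M, ∀ᶠ i in l, ∫ x, ρ i x * |ψ x| ∂μ ≤ M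

/-- Along `l`, the densities `ρ i` lose all their mass on compact sets disjoint from `Γ`. -/
def ConcentratesOn (μ : Measure X) (l : Filter ι) (ρ : ι → X → ℝ) (Γ : Set X) : Prop :=
  ∀ ψ : X → ℝ, Continuous ψ → HasCompactSupport ψ → Disjoint (tsupport ψ) Γ →
    Tendsto (fun i => ∫ x, ρ i x * |ψ x| ∂μ) l (𝓝 0)

lemma locallyBoundedMass_of_forall_exists (hρ : ∀ i, Continuous (ρ i)) (hρ0 : ∀ i x, 0 ≤ ρ i x)
    (h : ∀ x, ∃ g : X → ℝ, Continuous g ∧ HasCompactSupport g ∧ (∀ y, 0 ≤ g y) ∧ 0 < g x ∧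
      ∃ M, ∀ᶠ i in l, ∫ y, ρ i y * g y ∂μ ≤ M) : LocallyBoundedMass μ l ρ := by
  intro ψ hψ hψc
  choose g hg hgc hg0 hgpos M hM using h
  let A : X → ℝ := fun x => (|ψ x| + 1) / g x x
  have hA : ∀ x, 0 ≤ A x := fun x => div_nonneg (by positivity) (hgpos x).le
  obtain ⟨t, -, ht⟩ := hψc.isCompact.elim_nhds_subcover (fun x => {y | |ψ y| < A x * g x y})
    fun x _ => hψ.abs.continuousAt.eventually_lt (continuous_const.mul (hg x)).continuousAt (by
      simp only [A, div_mul_cancel₀ _ (hgpos x).ne', lt_add_one])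
  have hle : ∀ y, |ψ y| ≤ ∑ x ∈ t, A x * g x y := fun y => by
    have hnonneg : ∀ x ∈ t, 0 ≤ A x * g x y := fun x _ => mul_nonneg (hA x) (hg0 x y)
    by_cases hy : y ∈ tsupport ψ
    · obtain ⟨x, hx, hxy⟩ := Set.mem_iUnion₂.1 (ht hy)
      exact hxy.le.trans (Finset.single_le_sum hnonneg hx)
    · rw [image_eq_zero_of_notMem_tsupport hy, abs_zero]
      exact Finset.sum_nonneg hnonneg
  refine ⟨∑ x ∈ t, A x * M x, ((eventually_all_finset t).2 fun x _ => hM x).mono fun i hi => ?_⟩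
  have hint : ∀ x ∈ t, Integrable (fun y => A x * (ρ i y * g x y)) μ := fun x _ =>
    (integrable_mul_of_hasCompactSupport (hρ i) (hg x) (hgc x)).const_mul _
  calc ∫ y, ρ i y * |ψ y| ∂μ ≤ ∫ y, ∑ x ∈ t, A x * (ρ i y * g x y) ∂μ :=
        integral_mono (integrable_mul_of_hasCompactSupport (hρ i) hψ.abs hψc.abs)
          (integrable_finsetSum t hint) fun y => by
            simpa only [Finset.mul_sum, mul_left_comm (A _)] using
              mul_le_mul_of_nonneg_left (hle y) (hρ0 i y)
    _ = ∑ x ∈ t, A x * ∫ y, ρ i y * g x y ∂μ := by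
        simp only [integral_finsetSum t hint, integral_const_mul]
    _ ≤ ∑ x ∈ t, A x * M x :=
        Finset.sum_le_sum fun x hx => mul_le_mul_of_nonneg_left (hi x hx) (hA x)

/-- Split `|ψ| ≤ max (|ψ| - ε ^ 2) 0 + ε * √|ψ|`: the first summand is supported off `Γ`, and the
second is controlled by the local mass bound. -/
lemma ConcentratesOn.tendsto_of_eq_zero {Γ : Set X} (hΓ : ConcentratesOn μ l ρ Γ)
    (hbdd : LocallyBoundedMass μ l ρ) (hρ : ∀ i, Continuous (ρ i)) (hρ0 : ∀ i x, 0 ≤ ρ i x)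
    {ψ : X → ℝ} (hψ : Continuous ψ) (hψc : HasCompactSupport ψ) (h0 : ∀ x ∈ Γ, ψ x = 0) :
    Tendsto (fun i => ∫ x, ρ i x * |ψ x| ∂μ) l (𝓝 0) := by
  have hsqrt : Continuous fun x => √|ψ x| := by fun_prop
  have hsqrtc : HasCompactSupport fun x => √|ψ x| :=
    hψc.comp_left (g := fun y => √|y|) (by simp)
  obtain ⟨M, hM⟩ := hbdd _ hsqrt hsqrtc
  simp only [abs_of_nonneg (Real.sqrt_nonneg _)] at hM
  refine tendsto_order.2 ⟨fun a ha => .of_forall fun i =>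
    ha.trans_le (integral_nonneg fun x => mul_nonneg (hρ0 i x) (abs_nonneg _)), fun δ hδ => ?_⟩
  let ε : ℝ := δ / (2 * (|M| + 1))
  have hε : 0 < ε := by positivity
  let χ : X → ℝ := fun x => max (|ψ x| - ε ^ 2) 0
  have hχ : Continuous χ := by fun_prop
  have hχc : HasCompactSupport χ :=
    hψc.comp_left (g := fun y => max (|y| - ε ^ 2) 0) (by simp [sq_nonneg])
  filter_upwards [(hΓ χ hχ hχc (disjoint_tsupport_max_sub hψ (pow_pos hε 2) h0)).eventually
    (gt_mem_nhds (half_pos hδ)), hM] with i hχi hMi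
  calc ∫ x, ρ i x * |ψ x| ∂μ ≤ ∫ x, ρ i x * (|χ x| + ε * √|ψ x|) ∂μ :=
        integral_mul_mono_of_hasCompactSupport (hρ i) (hρ0 i) hψ.abs hψc.abs
          (hχ.abs.add (continuous_const.mul hsqrt))
          (hχc.abs.add (hsqrtc.mul_left (f := fun _ => ε)))
          fun x => abs_le_max_sub_sq_add_mul_sqrt hε.le (ψ x)
    _ = (∫ x, ρ i x * |χ x| ∂μ) + ε * ∫ x, ρ i x * √|ψ x| ∂μ := by
        rw [← integral_const_mul, ← integral_add
          (integrable_mul_of_hasCompactSupport (hρ i) hχ.abs hχc.abs)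
          ((integrable_mul_of_hasCompactSupport (hρ i) hsqrt hsqrtc).const_mul ε)]
        simp only [mul_add, mul_left_comm ε]
    _ < δ / 2 + ε * (|M| + 1) := add_lt_add_of_lt_of_le hχi
        (mul_le_mul_of_nonneg_left (by linarith [le_abs_self M]) hε.le)
    _ = δ := by simp only [ε]; field_simp; norm_num

end Densities

lemma exists_ultrafilter_concentratesOn {V : Type*} [NormedAddCommGroup V] [NormedSpace ℝ V]
    [FiniteDimensional ℝ V] [MeasurableSpace V] [OpensMeasurableSpace V] {μ : Measure V}
    [IsFiniteMeasureOnCompacts μ] {Γ : Set V} (hΓ : IsClosed Γ) {ι : Type*} {ρ : ι → V → ℝ}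
    (hρ : ∀ i, Continuous (ρ i)) (hρ0 : ∀ i x, 0 ≤ ρ i x)
    (h : ∀ χ : V → ℝ, IsTest χ → (∀ x, 0 ≤ χ x) → Disjoint (tsupport χ) Γ →
      ∃ i, ∫ x, ρ i x * χ x ∂μ ≤ 1) :
    ∃ 𝒰 : Ultrafilter ι, ConcentratesOn μ 𝒰 ρ Γ := by
  let S : Set (V → ℝ) := {χ | IsTest χ ∧ (∀ x, 0 ≤ χ x) ∧ Disjoint (tsupport χ) Γ}
  let light : S → Filter ι := fun χ => 𝓟 {i | ∫ x, ρ i x * χ.1 x ∂μ ≤ 1}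
  have mono {φ χ : V → ℝ} (hφ : IsTest φ) (hχ : IsTest χ) (hle : ∀ x, φ x ≤ χ x) (i : ι) :
      ∫ x, ρ i x * φ x ∂μ ≤ ∫ x, ρ i x * χ x ∂μ :=
    integral_mul_mono_of_hasCompactSupport (hρ i) (hρ0 i) hφ.continuous hφ.hasCompactSupport
      hχ.continuous hχ.hasCompactSupport hle
  have hdir : Directed (· ≥ ·) light := by
    rintro ⟨φ, hφ, hφ0, hφΓ⟩ ⟨χ, hχ, hχ0, hχΓ⟩
    refine ⟨⟨φ + χ, hφ.add hχ, fun x => add_nonneg (hφ0 x) (hχ0 x), ?_⟩, ?_, ?_⟩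
    · exact (hφΓ.union_left hχΓ).mono_left (tsupport_add φ χ)
    · exact principal_mono.2 fun i =>
        (mono hφ (hφ.add hχ) (fun x => le_add_of_nonneg_right (hχ0 x)) i).trans
    · exact principal_mono.2 fun i =>
        (mono hχ (hφ.add hχ) (fun x => le_add_of_nonneg_left (hφ0 x)) i).trans
  have : Nonempty S := ⟨0, IsTest.zero, fun _ => le_rfl, by simp [tsupport]⟩
  have : NeBot (⨅ χ, light χ) := iInf_neBot_of_directed' hdir fun ⟨χ, hχ, hχ0, hχΓ⟩ =>
    principal_neBot_iff.2 (h χ hχ hχ0 hχΓ)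
  refine ⟨Ultrafilter.of (⨅ χ, light χ), fun ψ hψ hψc hψΓ => tendsto_order.2 ⟨fun a ha =>
    .of_forall fun i => ha.trans_le (integral_nonneg fun x => mul_nonneg (hρ0 i x) (abs_nonneg _)),
    fun δ hδ => ?_⟩⟩
  obtain ⟨χ, hχ, hχΓ, hψχ⟩ := exists_isTest_abs_le hψ hψc hΓ.isOpen_compl
    (Set.subset_compl_iff_disjoint_right.2 hψΓ)
  have hmem : (2 / δ) • χ ∈ S := ⟨hχ.const_smul _, fun x =>
    mul_nonneg (by positivity) ((abs_nonneg _).trans (hψχ x)),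
    (Set.disjoint_left.2 hχΓ).mono_left (closure_mono (Function.support_const_smul_subset _ _))⟩
  filter_upwards [Ultrafilter.of_le _ (mem_iInf_of_mem ⟨_, hmem⟩ (mem_principal_self _))] with i hi
  calc ∫ x, ρ i x * |ψ x| ∂μ ≤ ∫ x, ρ i x * χ x ∂μ :=
        integral_mul_mono_of_hasCompactSupport (hρ i) (hρ0 i) hψ.abs hψc.abs hχ.continuous
          hχ.hasCompactSupport hψχ
    _ = δ / 2 * ∫ x, ρ i x * ((2 / δ) • χ) x ∂μ := by
        simp only [Pi.smul_apply, smul_eq_mul, mul_left_comm _ (2 / δ), integral_const_mul]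
        field_simp
    _ ≤ δ / 2 * 1 := mul_le_mul_of_nonneg_left hi (half_pos hδ).le
    _ < δ := by linarith

lemma exists_weakLimit {V : Type*} [NormedAddCommGroup V] [NormedSpace ℝ V] [MeasurableSpace V]
    [OpensMeasurableSpace V] {μ : Measure V} [IsFiniteMeasureOnCompacts μ] {ι : Type*}
    {𝒰 : Ultrafilter ι} {σ ρ : ι → V → ℝ} {c : ℝ} (hc : 0 ≤ c)
    (hσ : ∀ i, Continuous (σ i)) (hρ : ∀ i, Continuous (ρ i))
    (h : ∀ i x, |σ i x| ≤ c * ρ i x) (hbdd : LocallyBoundedMass μ 𝒰 ρ) :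
    ∃ Λ : (V → ℝ) →ₗ[ℝ] ℝ, ∀ ψ, IsTest ψ →
      Tendsto (fun i => ∫ x, σ i x * ψ x ∂μ) 𝒰 (𝓝 (Λ ψ)) := by
  have hint : ∀ i (ψ : testFunctions V), Integrable (fun x => σ i x * ψ.1 x) μ := fun i ψ =>
    integrable_mul_of_hasCompactSupport (hσ i) ψ.2.continuous ψ.2.hasCompactSupport
  let L : ι → testFunctions V →ₗ[ℝ] ℝ := fun i =>
    { toFun := fun ψ => ∫ x, σ i x * ψ.1 x ∂μ
      map_add' := fun φ ψ => by
        rw [← integral_add (hint i φ) (hint i ψ)]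
        simp only [Submodule.coe_add, Pi.add_apply, mul_add]
      map_smul' := fun a ψ => by
        simp only [SetLike.val_smul, Pi.smul_apply, smul_eq_mul, mul_left_comm _ a,
          integral_const_mul, RingHom.id_apply] }
  obtain ⟨Λ, hΛ⟩ := exists_linearMap_tendsto 𝒰 (L := L) fun ψ => by
    obtain ⟨M, hM⟩ := hbdd ψ.1 ψ.2.continuous ψ.2.hasCompactSupport
    exact ⟨c * M, hM.mono fun i hi => (abs_integral_mul_le_of_abs_le (hσ i) (hρ i) (h i)
      ψ.2.continuous ψ.2.hasCompactSupport).trans (mul_le_mul_of_nonneg_left hi hc)⟩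
  exact ⟨Λ, fun ψ hψ => hΛ ⟨ψ, hψ⟩⟩

/-! ### Energy conditions -/

lemma futureCausal_smul {c : ℝ} (hc : 0 ≤ c) {ξ : Vec4} (h : FutureCausal ξ) :
    FutureCausal (c • ξ) := by
  have hmink : mink (c • ξ) (c • ξ) = c ^ 2 * mink ξ ξ := by
    simp only [mink, Pi.smul_apply, smul_eq_mul]; ring
  exact ⟨hmink ▸ mul_nonneg (sq_nonneg c) h.1, mul_nonneg hc h.2⟩

lemma futureCausal_single_add (b : Fin 4) {r : ℝ} (hr : |r| ≤ 1) :
    FutureCausal (Pi.single 0 1 + r • Pi.single b 1) := by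
  obtain ⟨hneg, hle⟩ := abs_le.1 hr
  have htime : 0 ≤ 1 + r := by linarith
  have hspace : r * r ≤ 1 := by nlinarith
  fin_cases b
  · simpa [FutureCausal, mink] using And.intro (mul_self_nonneg (1 + r)) htime
  · simpa [FutureCausal, mink] using hspace
  · simpa [FutureCausal, mink] using hspace
  · simpa [FutureCausal, mink] using hspace

lemma coneD_zero : (0 : Mat4) ∈ coneD :=
  ⟨0, Fin.elim0, Fin.elim0, fun k => k.elim0, fun k => k.elim0, by simp⟩

lemma coneD_add {x y : Mat4} (hx : x ∈ coneD) (hy : y ∈ coneD) : x + y ∈ coneD := by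
  obtain ⟨n, ξ, ζ, hξ, hζ, rfl⟩ := hx
  obtain ⟨m, ξ', ζ', hξ', hζ', rfl⟩ := hy
  refine ⟨n + m, Fin.append ξ ξ', Fin.append ζ ζ',
    fun k => k.addCases (fun i => ?_) fun i => ?_,
    fun k => k.addCases (fun i => ?_) fun i => ?_, by simp [Fin.sum_univ_add]⟩
  · simpa using hξ i
  · simpa using hξ' i
  · simpa using hζ i
  · simpa using hζ' i

lemma coneD_smul {c : ℝ} (hc : 0 ≤ c) {x : Mat4} (hx : x ∈ coneD) : c • x ∈ coneD := by
  obtain ⟨n, ξ, ζ, hξ, hζ, rfl⟩ := hx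
  refine ⟨n, fun k => c • ξ k, ζ, fun k => futureCausal_smul hc (hξ k), hζ, ?_⟩
  simp only [Finset.smul_sum, smul_vecMulVec, vecMulVec_smul, ← smul_add, smul_comm c]

lemma coneD_sum {ι : Type*} {s : Finset ι} {f : ι → Mat4} (h : ∀ i ∈ s, f i ∈ coneD) :
    ∑ i ∈ s, f i ∈ coneD :=
  Finset.sum_induction f (· ∈ coneD) (fun _ _ => coneD_add) coneD_zero h

lemma symmProd_mem_coneD {ξ ζ : Vec4} (hξ : FutureCausal ξ) (hζ : FutureCausal ζ) :
    (1/2 : ℝ) • (vecMulVec ξ ζ + vecMulVec ζ ξ) ∈ coneD :=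
  ⟨1, fun _ => ξ, fun _ => ζ, fun _ => hξ, fun _ => hζ, by simp⟩

/-- The matrix `e₀ e₀ᵀ`; pairing with it extracts the energy density `T 0 0`. -/
def timeMat : Mat4 := single 0 0 1

/-- The symmetrized product `(e_a e_bᵀ + e_b e_aᵀ) / 2` of two coordinate vectors. -/
def symSingle {n : Type*} [DecidableEq n] (a b : n) : Matrix n n ℝ :=
  (1/2 : ℝ) • (single a b 1 + single b a 1)

lemma sum_smul_symSingle {n : Type*} [Fintype n] [DecidableEq n] {A : Matrix n n ℝ}
    (hA : Aᵀ = A) : ∑ a, ∑ b, A a b • symSingle a b = A := by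
  have hsum : ∑ a, ∑ b, A a b • single a b (1 : ℝ) = A := by
    simpa using (matrix_eq_sum_single A).symm
  have hswap : ∑ a, ∑ b, A a b • single b a (1 : ℝ) = A := by
    rw [Finset.sum_comm]
    simpa [transpose_apply] using (matrix_eq_sum_single Aᵀ).symm.trans hA
  simp only [symSingle, smul_comm _ (1/2 : ℝ), smul_add, Finset.sum_add_distrib,
    ← Finset.smul_sum, hsum, hswap]
  module

lemma timeMat_add_symSingle_mem_coneD (a b : Fin 4) {r : ℝ} (hr : |r| ≤ 1) :
    timeMat + r • symSingle a b ∈ coneD := by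
  have hplus := symmProd_mem_coneD (futureCausal_single_add a (r := 1) (by simp))
    (futureCausal_single_add b hr)
  have hminus := symmProd_mem_coneD (futureCausal_single_add a (r := -1) (by simp))
    (futureCausal_single_add b (r := -r) (by simpa using hr))
  convert coneD_smul (c := 1/2) (by norm_num) (coneD_add hplus hminus) using 1
  simp only [vecMulVec_add, add_vecMulVec, smul_vecMulVec, vecMulVec_smul,
    ← single_eq_single_vecMulVec_single, timeMat, symSingle]
  module

lemma timeMat_mem_coneD : timeMat ∈ coneD := by
  simpa using timeMat_add_symSingle_mem_coneD 0 0 (r := 0) (by simp)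

lemma transpose_timeMat : timeMatᵀ = timeMat := by simp [timeMat]

lemma smul_timeMat_add_mem_coneD {c : ℝ} (hc : 0 < c) {A : Mat4} (hA : Aᵀ = A)
    (h : ∀ a b, |A a b| ≤ c / 16) : c • timeMat + A ∈ coneD := by
  have hterm : ∀ a b : Fin 4, (c / 16) • (timeMat + (A a b / (c / 16)) • symSingle a b)
      = (c / 16) • timeMat + A a b • symSingle a b := fun a b => by
    rw [smul_add, smul_smul, mul_div_cancel₀ _ (by positivity)]
  have hsum : c • timeMat + A
      = ∑ a : Fin 4, ∑ b : Fin 4, (c / 16) • (timeMat + (A a b / (c / 16)) • symSingle a b) := by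
    simp only [hterm, Finset.sum_add_distrib, sum_smul_symSingle hA, Finset.sum_const,
      Finset.card_univ, Fintype.card_fin]
    module
  rw [hsum]
  refine coneD_sum fun a _ => coneD_sum fun b _ => coneD_smul (by positivity)
    (timeMat_add_symSingle_mem_coneD a b ?_)
  rw [abs_div, abs_of_pos (by positivity : 0 < c / 16), div_le_one (by positivity)]
  exact h a b

lemma generic_smul_timeMat {c : ℝ} (hc : 0 < c) : Generic (c • timeMat) := by
  have hsymm : (c • timeMat)ᵀ = c • timeMat := by rw [transpose_smul, transpose_timeMat]
  refine ⟨hsymm, mem_interior_iff_mem_nhds.2 ?_⟩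
  have hclose : ∀ a b : Fin 4, ∀ᶠ A : { A : Mat4 // Aᵀ = A } in 𝓝 ⟨c • timeMat, hsymm⟩,
      |(A.val - c • timeMat) a b| < c / 16 := fun a b => by
    have hcont : Continuous fun A : { A : Mat4 // Aᵀ = A } => |(A.val - c • timeMat) a b| :=
      ((continuous_subtype_val.sub continuous_const).matrix_elem a b).abs
    exact hcont.continuousAt.eventually_lt continuousAt_const (by simpa using hc)
  filter_upwards [eventually_all.2 fun a => eventually_all.2 (hclose a)] with A hA
  have hdiff : (A.val - c • timeMat)ᵀ = A.val - c • timeMat := by rw [transpose_sub, hsymm, A.2]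
  have hmem := smul_timeMat_add_mem_coneD hc hdiff fun a b => (hA a b).le
  rwa [add_sub_cancel] at hmem

lemma minner_smul_timeMat (T : Mat4) (c : ℝ) : minner T (c • timeMat) = T 0 0 * c := by
  simp [minner, Fin.sum_univ_four, timeMat, single_apply]

lemma DEC.abs_apply_le {T : Mat4} (hT : DEC T) (a b : Fin 4) : |T a b| ≤ T 0 0 := by
  have hpos : ∀ s r : ℝ, |s| ≤ 1 → |r| ≤ 1 →
      0 ≤ T 0 0 + (s * T a 0 + (r * T 0 b + r * (s * T a b))) := fun s r hs hr => by
    have h := hT _ _ (futureCausal_single_add a hs) (futureCausal_single_add b hr)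
    simpa only [← toBilin'_apply, map_add, map_smul, LinearMap.add_apply, LinearMap.smul_apply,
      toBilin'_single, smul_eq_mul, mul_add, add_assoc] using h
  have hpp := hpos 1 1 (by simp) (by simp)
  have hmm := hpos (-1) (-1) (by simp) (by simp)
  have hpm := hpos 1 (-1) (by simp) (by simp)
  have hmp := hpos (-1) 1 (by simp) (by simp)
  exact abs_le.2 ⟨by linarith, by linarith⟩

lemma DEC.nonneg {T : Mat4} (hT : DEC T) : 0 ≤ T 0 0 := (abs_nonneg _).trans (hT.abs_apply_le 0 0)

lemma unitTimelike_single : UnitTimelike (Pi.single 0 1) := by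
  simp [UnitTimelike, FutureTimelike, mink]

lemma unitTimelike_boost {a : Fin 4} (ha : a ≠ 0) :
    UnitTimelike ((5/4 : ℝ) • Pi.single 0 1 + (3/4 : ℝ) • Pi.single a 1) := by
  fin_cases a
  · exact absurd rfl ha
  all_goals
    simp [UnitTimelike, FutureTimelike, mink]
    norm_num

lemma DEC.abs_current_le {T : Mat4} (hT : DEC T) {κ : ℝ} (hκ : 0 ≤ κ) {j : Vec4}
    (hj : ∀ t, UnitTimelike t → |∑ a, j a * t a| ≤ κ * ∑ a, ∑ b, T a b * t a * t b)
    (a : Fin 4) : |j a| ≤ 7 * κ * T 0 0 := by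
  have hj' : ∀ t, UnitTimelike t → |j ⬝ᵥ t| ≤ κ * toBilin' T t t := fun t ht => by
    simpa only [dotProduct, toBilin'_apply, mul_right_comm _ (T _ _), mul_comm (t _) (T _ _)]
      using hj t ht
  have hrest : |j 0| ≤ κ * T 0 0 := by
    simpa only [dotProduct_single_one, toBilin'_single] using hj' _ unitTimelike_single
  have hle : ∀ c d, κ * T c d ≤ κ * T 0 0 := fun c d =>
    mul_le_mul_of_nonneg_left (le_of_abs_le (hT.abs_apply_le c d)) hκ
  by_cases ha : a = 0
  · subst ha
    linarith [abs_nonneg (j 0)]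
  have hboost := hj' _ (unitTimelike_boost ha)
  simp only [dotProduct_add, dotProduct_smul, dotProduct_single_one, map_add, map_smul,
    LinearMap.add_apply, LinearMap.smul_apply, toBilin'_single, smul_eq_mul] at hboost
  rw [abs_le] at hrest hboost ⊢
  constructor <;> linarith [hle 0 a, hle a 0, hle a a]

/-! ### Lowering an index -/

lemma E_mul_E : E * E = 1 := by
  ext i j
  fin_cases i <;> fin_cases j <;> simp [E]

lemma dotProduct_E_mulVec (u v : Vec4) : u ⬝ᵥ E *ᵥ v = mink u v := by
  simp only [E, mulVec_diagonal, dotProduct, Fin.sum_univ_four, mink, cons_val]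
  ring

lemma mink_E_mulVec (u v : Vec4) : mink (E *ᵥ u) (E *ᵥ v) = mink u v := by
  simp [mink, E, mulVec_diagonal]

lemma UnitTimelike.E_mulVec {u : Vec4} (h : UnitTimelike u) : UnitTimelike (E *ᵥ u) := by
  obtain ⟨⟨hpos, h0⟩, h1⟩ := h
  exact ⟨⟨by rwa [mink_E_mulVec], by simpa [E, mulVec_diagonal] using h0⟩, by rwa [mink_E_mulVec]⟩

lemma lorentz_dotProduct_E_mulVec {A : Mat4} (hA : Aᵀ = -A) (u : Vec4) :
    (E * A) *ᵥ u ⬝ᵥ E *ᵥ u = 0 := by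
  have hE : Eᵀ = E := by simp [E]
  have hself : A *ᵥ u ⬝ᵥ u = -(A *ᵥ u ⬝ᵥ u) := by
    conv_lhs => rw [dotProduct_comm, dotProduct_mulVec, ← mulVec_transpose, hA, neg_mulVec,
      neg_dotProduct]
  rw [dotProduct_mulVec, ← mulVec_transpose, hE, mulVec_mulVec, ← mul_assoc, E_mul_E, one_mul]
  linarith

/-! ### Partial derivatives -/

lemma pd_mul {f g : Vec4 → ℝ} {p : Vec4} (hf : DifferentiableAt ℝ f p)
    (hg : DifferentiableAt ℝ g p) (a : Fin 4) :
    pd a (f * g) p = f p * pd a g p + g p * pd a f p := by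
  simp [pd, fderiv_mul hf hg]

lemma pd_sub {f g : Vec4 → ℝ} {p : Vec4} (hf : DifferentiableAt ℝ f p)
    (hg : DifferentiableAt ℝ g p) (a : Fin 4) : pd a (f - g) p = pd a f p - pd a g p := by
  simp [pd, fderiv_sub hf hg]

lemma pd_const_smul (k : ℝ) (f : Vec4 → ℝ) (a : Fin 4) : pd a (k • f) = k • pd a f := by
  ext p
  simp [pd, fderiv_const_smul_field]

lemma pd_coord (a b : Fin 4) (p : Vec4) :
    pd b (fun q => q a) p = (Pi.single b 1 : Vec4) a :=
  DFunLike.congr_fun (hasFDerivAt_apply (𝕜 := ℝ) a p).fderiv (Pi.single b 1)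

lemma pd_comp_time {g : ℝ → ℝ} {p : Vec4} (hg : DifferentiableAt ℝ g (p 0)) (b : Fin 4) :
    pd b (fun q => g (q 0)) p = (Pi.single b 1 : Vec4) 0 * deriv g (p 0) := by
  have hcomp := (hg.hasDerivAt.comp_hasFDerivAt p (hasFDerivAt_apply (𝕜 := ℝ) 0 p)).fderiv
  exact (DFunLike.congr_fun hcomp (Pi.single b 1)).trans (mul_comm _ _)

lemma contDiff_pd {f : Vec4 → ℝ} (hf : ContDiff ℝ ∞ f) (a : Fin 4) : ContDiff ℝ ∞ (pd a f) :=
  (hf.fderiv_right (m := ∞) (by simp)).clm_apply contDiff_const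

lemma IsTest.pd {ψ : Vec4 → ℝ} (hψ : IsTest ψ) (a : Fin 4) : IsTest (pd a ψ) :=
  ⟨contDiff_pd hψ.contDiff a, hψ.hasCompactSupport.fderiv_apply (𝕜 := ℝ) (v := Pi.single a 1)⟩

lemma integral_mul_pd {f ψ : Vec4 → ℝ} (hf : ContDiff ℝ ∞ f) (hψ : IsTest ψ) (a : Fin 4) :
    ∫ p, f p * pd a ψ p = -∫ p, pd a f p * ψ p :=
  integral_mul_fderiv_eq_neg_fderiv_mul_of_integrable
    (hψ.mul_left (contDiff_pd hf a)).integrable ((hψ.pd a).mul_left hf).integrable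
    (hψ.mul_left hf).integrable (fun p _ => hf.differentiable (by simp) p)
    fun p _ => hψ.contDiff.differentiable (by simp) p

/-! ### Curves parametrised by coordinate time -/

/-- Smooth curves in spacetime whose parameter is the time coordinate. -/
structure IsTimeParametrized (c : ℝ → Vec4) : Prop where
  contDiff : ContDiff ℝ ∞ c
  time : ∀ r, c r 0 = r

/-- The spatial displacement of an event from the simultaneous event on the curve. -/
def dev (c : ℝ → Vec4) (p : Vec4) : Vec4 := p - c (p 0)

/-- A smooth cutoff to a tube around the curve, equal to one near the curve. -/
def tube (c : ℝ → Vec4) (p : Vec4) : ℝ := Real.smoothTransition (2 - dev c p ⬝ᵥ dev c p)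

/-- The extension of a function of coordinate time to a function on spacetime supported in a tube
around the curve. -/
def lift (c : ℝ → Vec4) : (ℝ → ℝ) →ₗ[ℝ] (Vec4 → ℝ) where
  toFun φ p := φ (p 0) * tube c p
  map_add' _ _ := funext fun _ => add_mul _ _ _
  map_smul' _ _ := funext fun _ => mul_assoc _ _ _

lemma lift_apply (c : ℝ → Vec4) (φ : ℝ → ℝ) (p : Vec4) : lift c φ p = φ (p 0) * tube c p := rfl

lemma tube_nonneg (c : ℝ → Vec4) (p : Vec4) : 0 ≤ tube c p := Real.smoothTransition.nonneg _

lemma lift_nonneg (c : ℝ → Vec4) {φ : ℝ → ℝ} (hφ : ∀ t, 0 ≤ φ t) (p : Vec4) : 0 ≤ lift c φ p :=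
  mul_nonneg (hφ _) (tube_nonneg c p)

lemma add_dev (c : ℝ → Vec4) (p : Vec4) : c (p 0) + dev c p = p := add_sub_cancel _ _

lemma norm_dev_le_of_tube_ne_zero {c : ℝ → Vec4} {p : Vec4} (h : tube c p ≠ 0) :
    ‖dev c p‖ ≤ 2 := by
  have hlt : dev c p ⬝ᵥ dev c p < 2 := by
    by_contra! hle
    exact h (Real.smoothTransition.zero_of_nonpos (by linarith))
  refine (pi_norm_le_iff_of_nonneg zero_le_two).2 fun a => abs_le_of_sq_le_sq ?_ zero_le_two
  have hle : dev c p a * dev c p a ≤ dev c p ⬝ᵥ dev c p :=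
    Finset.single_le_sum (f := fun a => dev c p a * dev c p a) (fun _ _ => mul_self_nonneg _)
      (Finset.mem_univ a)
  linarith [sq (dev c p a)]

namespace IsTimeParametrized

variable {c : ℝ → Vec4}

lemma contDiff_dev (hc : IsTimeParametrized c) : ContDiff ℝ ∞ (dev c) :=
  contDiff_id.sub (hc.contDiff.comp (contDiff_apply ℝ ℝ 0))

lemma contDiff_dev_apply (hc : IsTimeParametrized c) (a : Fin 4) :
    ContDiff ℝ ∞ fun p => dev c p a := contDiff_pi.1 hc.contDiff_dev a

lemma contDiff_tube (hc : IsTimeParametrized c) : ContDiff ℝ ∞ (tube c) :=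
  Real.smoothTransition.contDiff.comp <| contDiff_const.sub <|
    ContDiff.sum fun a _ => (hc.contDiff_dev_apply a).mul (hc.contDiff_dev_apply a)

lemma dev_curve (hc : IsTimeParametrized c) (r : ℝ) : dev c (c r) = 0 := by
  rw [dev, hc.time, sub_self]

lemma tube_eventuallyEq (hc : IsTimeParametrized c) (r : ℝ) : tube c =ᶠ[𝓝 (c r)] 1 := by
  have hdev : Continuous fun p => dev c p ⬝ᵥ dev c p :=
    hc.contDiff_dev.continuous.dotProduct hc.contDiff_dev.continuous
  filter_upwards [hdev.continuousAt.eventually_lt continuousAt_const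
    (show dev c (c r) ⬝ᵥ dev c (c r) < 1 by simp [hc.dev_curve])] with p hp
  exact Real.smoothTransition.one_of_one_le (by linarith)

lemma lift_comp (hc : IsTimeParametrized c) (φ : ℝ → ℝ) : lift c φ ∘ c = φ := by
  ext r
  simp [lift_apply, hc.time, (hc.tube_eventuallyEq r).eq_of_nhds]

lemma contDiff_deriv_apply (hc : IsTimeParametrized c) (a : Fin 4) :
    ContDiff ℝ ∞ fun r => deriv c r a :=
  contDiff_pi.1 (contDiff_infty_iff_deriv.1 hc.contDiff).2 a

lemma isClosed_range (hc : IsTimeParametrized c) : IsClosed (Set.range c) := by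
  have hrange : Set.range c = dev c ⁻¹' {0} := by
    ext p
    refine ⟨?_, fun hp => ⟨p 0, ?_⟩⟩
    · rintro ⟨r, rfl⟩
      exact hc.dev_curve r
    · rw [← add_dev c p, show dev c p = 0 from hp, add_zero, hc.time]
  rw [hrange]
  exact isClosed_singleton.preimage hc.contDiff_dev.continuous

lemma isTest_comp (hc : IsTimeParametrized c) {ψ : Vec4 → ℝ} (hψ : IsTest ψ) : IsTest (ψ ∘ c) := by
  refine ⟨hψ.contDiff.comp hc.contDiff, HasCompactSupport.intro
    (hψ.hasCompactSupport.isCompact.image (continuous_apply 0)) fun r hr => ?_⟩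
  by_contra hne
  exact hr ⟨c r, subset_tsupport ψ hne, hc.time r⟩

lemma continuous_lift (hc : IsTimeParametrized c) {φ : ℝ → ℝ} (hφ : Continuous φ) :
    Continuous (lift c φ) := (hφ.comp (continuous_apply 0)).mul hc.contDiff_tube.continuous

lemma contDiff_lift (hc : IsTimeParametrized c) {φ : ℝ → ℝ} (hφ : ContDiff ℝ ∞ φ) :
    ContDiff ℝ ∞ (lift c φ) := (hφ.comp (contDiff_apply ℝ ℝ 0)).mul hc.contDiff_tube

lemma exists_isCompact_forall_mem (hc : IsTimeParametrized c) {I : Set ℝ} (hI : IsCompact I) :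
    ∃ K : Set Vec4, IsCompact K ∧ ∀ p : Vec4, p 0 ∈ I → tube c p ≠ 0 → p ∈ K :=
  ⟨(fun x : ℝ × Vec4 => c x.1 + x.2) '' (I ×ˢ Metric.closedBall 0 2),
    (hI.prod (isCompact_closedBall _ _)).image
      ((hc.contDiff.continuous.comp continuous_fst).add continuous_snd),
    fun p hp htube => ⟨(p 0, dev c p),
      ⟨hp, mem_closedBall_zero_iff.2 (norm_dev_le_of_tube_ne_zero htube)⟩, add_dev c p⟩⟩

lemma hasCompactSupport_lift (hc : IsTimeParametrized c) {φ : ℝ → ℝ} (hφ : HasCompactSupport φ) :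
    HasCompactSupport (lift c φ) := by
  obtain ⟨K, hK, hmem⟩ := hc.exists_isCompact_forall_mem hφ.isCompact
  refine HasCompactSupport.intro hK fun p hp => ?_
  by_contra hne
  exact hp (hmem p (subset_tsupport φ (left_ne_zero_of_mul hne)) (right_ne_zero_of_mul hne))

lemma isTest_lift (hc : IsTimeParametrized c) {φ : ℝ → ℝ} (hφ : IsTest φ) : IsTest (lift c φ) :=
  ⟨hc.contDiff_lift hφ.contDiff, hc.hasCompactSupport_lift hφ.hasCompactSupport⟩

lemma pd_lift (hc : IsTimeParametrized c) {φ : ℝ → ℝ} (hφ : Differentiable ℝ φ) (b : Fin 4)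
    (p : Vec4) : pd b (lift c φ) p
      = (Pi.single b 1 : Vec4) 0 * lift c (deriv φ) p + φ (p 0) * pd b (tube c) p := by
  have hmul := pd_mul (f := fun q : Vec4 => φ (q 0))
    ((hφ (p 0)).comp p (differentiable_pi.1 differentiable_id 0 p))
    (hc.contDiff_tube.differentiable (by simp) p) b
  rw [pd_comp_time (hφ _)] at hmul
  rw [lift_apply, mul_left_comm, mul_comm _ (tube c p), mul_left_comm, add_comm]
  refine hmul.trans ?_
  ring

lemma pd_tube_curve (hc : IsTimeParametrized c) (b : Fin 4) (r : ℝ) :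
    pd b (tube c) (c r) = 0 := by
  simp [pd, (hc.tube_eventuallyEq r).fderiv_eq]

lemma pd_lift_comp (hc : IsTimeParametrized c) {φ : ℝ → ℝ} (hφ : Differentiable ℝ φ) (b : Fin 4) :
    pd b (lift c φ) ∘ c = (Pi.single b 1 : Vec4) 0 • deriv φ := by
  ext r
  have hr := congrFun (hc.lift_comp (deriv φ)) r
  simp only [Function.comp_apply] at hr
  simp [hc.pd_lift hφ, hr, hc.pd_tube_curve]

lemma pd_dev_apply_curve (hc : IsTimeParametrized c) (a b : Fin 4) (r : ℝ) :
    pd b (fun p => dev c p a) (c r)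
      = (Pi.single b 1 : Vec4) a - (Pi.single b 1 : Vec4) 0 * deriv c r a := by
  have hca : Differentiable ℝ fun r => c r a :=
    (contDiff_pi.1 hc.contDiff a).differentiable (by simp)
  have hsub := pd_sub (f := fun p => p a) (g := fun p => c (p 0) a) (p := c r) (by fun_prop)
    (hca.comp (by fun_prop : Differentiable ℝ fun p : Vec4 => p 0)).differentiableAt b
  refine hsub.trans ?_
  rw [pd_coord, pd_comp_time (g := fun r => c r a) (hca _), hc.time,
    deriv_pi fun i => (contDiff_pi.1 hc.contDiff i).differentiable (by simp) r]

lemma pd_dev_mul_comp (hc : IsTimeParametrized c) {ψ : Vec4 → ℝ} (hψ : Differentiable ℝ ψ)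
    (a b : Fin 4) : pd b ((fun p => dev c p a) * ψ) ∘ c
      = (Pi.single b 1 : Vec4) a • (ψ ∘ c)
        - (Pi.single b 1 : Vec4) 0 • ((fun r => deriv c r a) * (ψ ∘ c)) := by
  ext r
  simp only [Function.comp_apply, pd_mul ((hc.contDiff_dev_apply a).differentiable (by simp) _)
    (hψ _), hc.pd_dev_apply_curve, hc.dev_curve, Pi.zero_apply, zero_mul, zero_add, Pi.sub_apply,
    Pi.smul_apply, Pi.mul_apply, smul_eq_mul]
  ring

lemma exists_weakLimit_comp (hc : IsTimeParametrized c) {μ : Measure Vec4}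
    [IsFiniteMeasureOnCompacts μ] {ι : Type*} {𝒰 : Ultrafilter ι} {σ ρ : ι → Vec4 → ℝ} {k : ℝ}
    (hk : 0 ≤ k) (hσ : ∀ i, Continuous (σ i)) (hρ : ∀ i, Continuous (ρ i))
    (h : ∀ i p, |σ i p| ≤ k * ρ i p) (hρ0 : ∀ i p, 0 ≤ ρ i p) (hbdd : LocallyBoundedMass μ 𝒰 ρ)
    (hconc : ConcentratesOn μ 𝒰 ρ (Set.range c)) :
    ∃ Λ : (ℝ → ℝ) →ₗ[ℝ] ℝ, ∀ ψ, IsTest ψ →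
      Tendsto (fun i => ∫ p, σ i p * ψ p ∂μ) 𝒰 (𝓝 (Λ (ψ ∘ c))) := by
  obtain ⟨Λ, hΛ⟩ := exists_weakLimit hk hσ hρ h hbdd
  refine ⟨Λ ∘ₗ lift c, fun ψ hψ => ?_⟩
  have hlift := hc.isTest_lift (hc.isTest_comp hψ)
  have hdiff := hψ.sub hlift
  have hzero : Λ (ψ - lift c (ψ ∘ c)) = 0 := by
    have hvanish : ∀ p ∈ Set.range c, (ψ - lift c (ψ ∘ c)) p = 0 := by
      rintro _ ⟨r, rfl⟩
      exact sub_eq_zero.2 (congrFun (hc.lift_comp (ψ ∘ c)) r).symm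
    have hmass := (hconc.tendsto_of_eq_zero hbdd hρ hρ0 hdiff.continuous hdiff.hasCompactSupport
      hvanish).const_mul k
    rw [mul_zero] at hmass
    exact tendsto_nhds_unique (hΛ _ hdiff) (squeeze_zero_norm (fun i =>
      abs_integral_mul_le_of_abs_le (hσ i) (hρ i) (h i) hdiff.continuous
        hdiff.hasCompactSupport) hmass)
  rw [map_sub, sub_eq_zero] at hzero
  exact hzero ▸ hΛ ψ hψ

end IsTimeParametrized

/-! ### Charged matter -/

/-- Charged matter with stress `T` and current `J` in the force field `G`, with charge-to-mass ratio
at most `κ`. For the electromagnetic field `F` the force field is `E * F`. -/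
structure IsChargedMatter (G : Vec4 → Mat4) (κ : ℝ) (T : Vec4 → Mat4) (J : Vec4 → Vec4) :
    Prop where
  smooth : SmoothMatField T
  symm : SymValued T
  dec : ∀ p, DEC (T p)
  smooth_current : ∀ a, ContDiff ℝ ∞ fun p => J p a
  conserved : ∀ p, ∑ a, pd a (fun q => J q a) p = 0
  force : ∀ p a, ∑ b, pd b (fun q => T q a b) p = ∑ b, G p a b * J p b
  bound : ∀ p t, UnitTimelike t → |∑ a, J p a * t a| ≤ κ * ∑ a, ∑ b, T p a b * t a * t b

namespace IsChargedMatter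

variable {G : Vec4 → Mat4} {κ : ℝ} {T : Vec4 → Mat4} {J : Vec4 → Vec4}

lemma smul (h : IsChargedMatter G κ T J) {k : ℝ} (hk : 0 ≤ k) :
    IsChargedMatter G κ (k • T) (k • J) where
  smooth a b := contDiff_const.mul (h.smooth a b)
  symm p := by rw [Pi.smul_apply, transpose_smul, h.symm]
  dec p ξ ζ hξ hζ := by
    simpa only [Pi.smul_apply, Matrix.smul_apply, smul_eq_mul, mul_assoc, mul_left_comm _ k,
      ← Finset.mul_sum] using mul_nonneg hk (h.dec p ξ ζ hξ hζ)
  smooth_current a := contDiff_const.mul (h.smooth_current a)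
  conserved p := by
    change ∑ a, pd a (k • fun q => J q a) p = 0
    simp only [pd_const_smul, Pi.smul_apply, ← Finset.smul_sum, h.conserved, smul_zero]
  force p a := by
    change ∑ b, pd b (k • fun q => T q a b) p = ∑ b, G p a b * (k * J p b)
    simp only [pd_const_smul, Pi.smul_apply, h.force, mul_left_comm _ k, ← Finset.mul_sum,
      smul_eq_mul]
  bound p t ht := by
    simp only [Pi.smul_apply, Matrix.smul_apply, smul_eq_mul, mul_assoc, ← Finset.mul_sum, abs_mul,
      abs_of_nonneg hk, mul_left_comm κ k]
    simpa only [mul_assoc] using mul_le_mul_of_nonneg_left (h.bound p t ht) hk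

lemma continuous_stress (h : IsChargedMatter G κ T J) (a b : Fin 4) :
    Continuous fun p => T p a b := (h.smooth a b).continuous

lemma continuous_current (h : IsChargedMatter G κ T J) (a : Fin 4) :
    Continuous fun p => J p a := (h.smooth_current a).continuous

lemma energy_nonneg (h : IsChargedMatter G κ T J) (p : Vec4) : 0 ≤ T p 0 0 := (h.dec p).nonneg

lemma abs_stress_le (h : IsChargedMatter G κ T J) (a b : Fin 4) (p : Vec4) :
    |T p a b| ≤ 1 * T p 0 0 := by
  rw [one_mul]
  exact (h.dec p).abs_apply_le a b

lemma abs_current_le (h : IsChargedMatter G κ T J) (hκ : 0 ≤ κ) (a : Fin 4) (p : Vec4) :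
    |J p a| ≤ 7 * κ * T p 0 0 := (h.dec p).abs_current_le hκ (h.bound p) a

lemma sum_integral_current_mul_pd (h : IsChargedMatter G κ T J) {ψ : Vec4 → ℝ} (hψ : IsTest ψ) :
    ∑ b, ∫ p, J p b * pd b ψ p = 0 := by
  have hint : ∀ b, Integrable fun p => pd b (fun q => J q b) p * ψ p := fun b =>
    (hψ.mul_left (contDiff_pd (h.smooth_current b) b)).integrable
  simp only [integral_mul_pd (h.smooth_current _) hψ, Finset.sum_neg_distrib]
  rw [← integral_finsetSum _ fun b _ => hint b]
  simp only [← Finset.sum_mul, h.conserved, zero_mul, integral_zero, neg_zero]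

lemma sum_integral_stress_mul_pd (h : IsChargedMatter G κ T J)
    (hG : ∀ a b, ContDiff ℝ ∞ fun p => G p a b) {ψ : Vec4 → ℝ} (hψ : IsTest ψ) (a : Fin 4) :
    (∑ b, ∫ p, T p a b * pd b ψ p) + ∑ b, ∫ p, J p b * (G p a b * ψ p) = 0 := by
  have hstress : ∀ b, Integrable fun p => pd b (fun q => T q a b) p * ψ p := fun b =>
    (hψ.mul_left (contDiff_pd (h.smooth a b) b)).integrable
  have hforce : ∀ b, Integrable fun p => J p b * (G p a b * ψ p) := fun b =>
    ((hψ.mul_left (hG a b)).mul_left (h.smooth_current b)).integrable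
  have hpoint : ∀ p, ∑ b, J p b * (G p a b * ψ p) = ∑ b, pd b (fun q => T q a b) p * ψ p := by
    intro p
    rw [← Finset.sum_mul, h.force, Finset.sum_mul]
    exact Finset.sum_congr rfl fun b _ => by ring
  simp only [integral_mul_pd (h.smooth a _) hψ, Finset.sum_neg_distrib]
  rw [← integral_finsetSum _ fun b _ => hstress b, ← integral_finsetSum _ fun b _ => hforce b]
  simp only [hpoint, neg_add_cancel]

end IsChargedMatter

/-! ### Matter concentrating on a tracked curve -/

lemma Tracks.comp {𝒞 : Set (Vec4 → Mat4)} {γ : ℝ → Vec4} (h : Tracks 𝒞 γ) {s : ℝ → ℝ}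
    (hs : Function.Surjective s) : Tracks 𝒞 (γ ∘ s) := by
  intro x hx hxc hxs hcone ⟨t, ht⟩
  rw [hs.range_comp γ] at hcone
  exact h x hx hxc hxs hcone ⟨s t, ht⟩

lemma Tracks.exists_integral_energy_pos {𝒞 : Set (Vec4 → Mat4)} {γ : ℝ → Vec4} (h : Tracks 𝒞 γ)
    {g : Vec4 → ℝ} (hg : IsTest g) {O : Set Vec4} (hO : IsOpen O) (hγO : Set.range γ ⊆ O)
    (hg0 : ∀ p ∈ O, 0 ≤ g p) {t : ℝ} (ht : 0 < g (γ t)) :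
    ∃ T ∈ 𝒞, 0 < ∫ p, T p 0 0 * g p := by
  obtain ⟨T, hT, hpos⟩ := h (fun p => g p • timeMat)
    (fun a b => hg.contDiff.mul contDiff_const) hg.hasCompactSupport.smul_right
    (fun p => by rw [transpose_smul, transpose_timeMat])
    ⟨O, hO, hγO, fun p hp => coneD_smul (hg0 p hp) timeMat_mem_coneD⟩
    ⟨t, generic_smul_timeMat ht⟩
  exact ⟨T, hT, by simpa only [minner_smul_timeMat] using hpos⟩

/-- Testing with `β - χ`, which is nonnegative near the curve, yields matter with more energy in `β`
than in `χ`; it is then rescaled. -/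
lemma Tracks.exists_isChargedMatter {G : Vec4 → Mat4} {κ : ℝ}
    {𝒞 : Set ((Vec4 → Mat4) × (Vec4 → Vec4))} (hmatter : ∀ TJ ∈ 𝒞, IsChargedMatter G κ TJ.1 TJ.2)
    {γ : ℝ → Vec4} (h : Tracks (Prod.fst '' 𝒞) γ) {β χ : Vec4 → ℝ} (hβ : IsTest β)
    (hβ0 : ∀ p, 0 ≤ β p) {t : ℝ} (ht : 0 < β (γ t)) (hχ : IsTest χ) (hχ0 : ∀ p, 0 ≤ χ p)
    (hχγ : Disjoint (tsupport χ) (Set.range γ)) :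
    ∃ T J, IsChargedMatter G κ T J ∧ ∫ p, T p 0 0 * β p = 1 ∧ ∫ p, T p 0 0 * χ p ≤ 1 := by
  have hχ_eq : ∀ p ∈ (tsupport χ)ᶜ, χ p = 0 := fun p hp => image_eq_zero_of_notMem_tsupport hp
  have hγ : Set.range γ ⊆ (tsupport χ)ᶜ := hχγ.subset_compl_left
  obtain ⟨_, ⟨⟨T, J⟩, hTJ, rfl⟩, hpos⟩ := h.exists_integral_energy_pos (hβ.sub hχ)
    (isClosed_tsupport χ).isOpen_compl hγ
    (fun p hp => by simpa only [Pi.sub_apply, hχ_eq p hp, sub_zero] using hβ0 p)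
    (t := t) (by simpa only [Pi.sub_apply, hχ_eq _ (hγ ⟨t, rfl⟩), sub_zero] using ht)
  have hm : IsChargedMatter G κ T J := hmatter _ hTJ
  have hint : ∀ {ψ : Vec4 → ℝ}, IsTest ψ → Integrable fun p => T p 0 0 * ψ p := fun hψ =>
    (hψ.mul_left (hm.smooth 0 0)).integrable
  simp only [Pi.sub_apply, mul_sub, integral_sub (hint hβ) (hint hχ), sub_pos] at hpos
  have hχ_nonneg : 0 ≤ ∫ p, T p 0 0 * χ p :=
    integral_nonneg fun p => mul_nonneg (hm.energy_nonneg p) (hχ0 p)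
  have hβ_pos := hχ_nonneg.trans_lt hpos
  refine ⟨_, _, hm.smul (inv_nonneg.2 hβ_pos.le), ?_, ?_⟩ <;>
    simp only [Pi.smul_apply, Matrix.smul_apply, smul_eq_mul, mul_assoc, integral_const_mul]
  · exact inv_mul_cancel₀ hβ_pos.ne'
  · exact inv_mul_le_one_of_le₀ hpos.le hβ_pos.le

/-- Families of charged matter with unit energy in the test function `β` whose energy concentrates
on the curve along the ultrafilter `𝒰`. -/
structure IsConcentrating {ι : Type*} (G : Vec4 → Mat4) (κ : ℝ) (c : ℝ → Vec4) (β : Vec4 → ℝ)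
    (𝒰 : Ultrafilter ι) (T : ι → Vec4 → Mat4) (J : ι → Vec4 → Vec4) : Prop where
  matter : ∀ i, IsChargedMatter G κ (T i) (J i)
  normalized : ∀ i, ∫ p, T i p 0 0 * β p = 1
  concentratesOn : ConcentratesOn volume 𝒰 (fun i p => T i p 0 0) (Set.range c)

lemma Tracks.exists_isConcentrating {G : Vec4 → Mat4} {κ : ℝ}
    {𝒞 : Set ((Vec4 → Mat4) × (Vec4 → Vec4))} (hmatter : ∀ TJ ∈ 𝒞, IsChargedMatter G κ TJ.1 TJ.2)
    {c : ℝ → Vec4} (h : Tracks (Prod.fst '' 𝒞) c) (hc : IsTimeParametrized c) {β : Vec4 → ℝ}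
    (hβ : IsTest β) (hβ0 : ∀ p, 0 ≤ β p) {t : ℝ} (ht : 0 < β (c t)) :
    ∃ (ι : Type) (𝒰 : Ultrafilter ι) (T : ι → Vec4 → Mat4) (J : ι → Vec4 → Vec4),
      IsConcentrating G κ c β 𝒰 T J := by
  let ι : Type := {TJ : (Vec4 → Mat4) × (Vec4 → Vec4) //
    IsChargedMatter G κ TJ.1 TJ.2 ∧ ∫ p, TJ.1 p 0 0 * β p = 1}
  obtain ⟨𝒰, h𝒰⟩ := exists_ultrafilter_concentratesOn (μ := volume) hc.isClosed_range
    (ρ := fun (i : ι) p => i.1.1 p 0 0) (fun i => i.2.1.continuous_stress 0 0)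
    (fun i => i.2.1.energy_nonneg) fun χ hχ hχ0 hχc => by
      obtain ⟨T, J, hm, hβ1, hχ1⟩ := h.exists_isChargedMatter hmatter hβ hβ0 ht hχ hχ0 hχc
      exact ⟨⟨(T, J), hm, hβ1⟩, hχ1⟩
  exact ⟨ι, 𝒰, fun i => i.1.1, fun i => i.1.2, fun i => i.2.1, fun i => i.2.2, h𝒰⟩

/-! ### Transport of energy along the curve -/

lemma exists_contDiff_deriv_add_le (C t₁ : ℝ) :
    ∃ u : ℝ → ℝ, ContDiff ℝ ∞ u ∧ (∀ t, 0 ≤ u t) ∧ 0 < u t₁ ∧ (∀ t ≥ t₁ + 1, u t = 0) ∧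
      ∀ t, deriv u t + C * u t ≤ -u t := by
  let S : ℝ → ℝ := fun t => Real.smoothTransition (t₁ + 1 - t)
  have hS : ContDiff ℝ ∞ S :=
    Real.smoothTransition.contDiff.comp (contDiff_const.sub contDiff_id)
  have hS_anti : Antitone S := fun x y hxy => Real.smoothTransition.monotone (by linarith)
  let e : ℝ → ℝ := fun t => Real.exp (-(C + 1) * t)
  have he : ∀ t, HasDerivAt e (e t * -(C + 1)) t := fun t => by
    simpa only [id, mul_one] using ((hasDerivAt_id t).const_mul (-(C + 1))).exp
  refine ⟨e * S, ((contDiff_const.mul contDiff_id).exp).mul hS,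
    fun t => mul_nonneg (Real.exp_nonneg _) (Real.smoothTransition.nonneg _),
    mul_pos (Real.exp_pos _) (Real.smoothTransition.pos_of_pos (by simp)),
    fun t ht => mul_eq_zero_of_right _ (Real.smoothTransition.zero_of_nonpos (by linarith)),
    fun t => ?_⟩
  rw [((he t).mul (hS.differentiable (by simp) t).hasDerivAt).deriv, Pi.mul_apply]
  linarith [mul_nonpos_of_nonneg_of_nonpos (Real.exp_nonneg (-(C + 1) * t))
    (hS_anti.deriv_nonpos (x := t))]

lemma exists_isTest_deriv_add_le_of_nonneg (C : ℝ) {t₁ : ℝ} (ht₁ : 0 ≤ t₁) :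
    ∃ h : ℝ → ℝ, IsTest h ∧ (∀ t, t₁ + 1 < |t| → h t = 0) ∧
      (∀ t ∉ Set.Icc (-1) 1, deriv h t + C * |h t| ≤ 0) ∧
      (t₁ ∉ Set.Icc (-1) 1 → deriv h t₁ + C * |h t₁| < 0) := by
  obtain ⟨u, hu, hu0, hu_pos, hu_end, hu_deriv⟩ := exists_contDiff_deriv_add_le C t₁
  let h : ℝ → ℝ := fun t => Real.smoothTransition (t + 1) * u t
  have h_start : ∀ t < -1, h =ᶠ[𝓝 t] 0 := fun t ht => by
    filter_upwards [eventually_lt_nhds ht] with x hx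
    exact mul_eq_zero_of_left (Real.smoothTransition.zero_of_nonpos (by linarith)) _
  have h_supp : ∀ t, t₁ + 1 < |t| → h t = 0 := fun t ht => by
    rcases lt_abs.1 ht with hlt | hlt
    · exact mul_eq_zero_of_right _ (hu_end t hlt.le)
    · exact (h_start t (by linarith)).eq_of_nhds
  have h_deriv : ∀ t > 0, deriv h t + C * |h t| ≤ -u t := fun t ht => by
    have h_eq : h =ᶠ[𝓝 t] u := by
      filter_upwards [eventually_gt_nhds ht] with x hx
      simp only [h, Real.smoothTransition.one_of_one_le (by linarith : 1 ≤ x + 1), one_mul]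
    rw [h_eq.deriv_eq, h_eq.eq_of_nhds, abs_of_nonneg (hu0 t)]
    exact hu_deriv t
  refine ⟨h, ⟨?_, ?_⟩, h_supp, fun t ht => ?_, fun ht => ?_⟩
  · exact (Real.smoothTransition.contDiff.comp (contDiff_id.add contDiff_const)).mul hu
  · refine HasCompactSupport.intro (isCompact_closedBall (0 : ℝ) (t₁ + 1)) fun t ht => h_supp t ?_
    simpa using ht
  · rcases lt_or_ge t (-1) with hlt | hge
    · simp [(h_start t hlt).deriv_eq, (h_start t hlt).eq_of_nhds]
    · have : 1 < t := by by_contra! hle; exact ht ⟨hge, hle⟩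
      linarith [h_deriv t (by linarith), hu0 t]
  · have : 1 < t₁ := by by_contra! hle; exact ht ⟨by linarith, hle⟩
    linarith [h_deriv t₁ (by linarith)]

/-- For `t₁ < 0` the profile is reflected: `t ↦ -h (-t)` has derivative `h' (-t)`. -/
lemma exists_isTest_deriv_add_le (C t₁ : ℝ) :
    ∃ h : ℝ → ℝ, IsTest h ∧ (∀ t, |t₁| + 1 < |t| → h t = 0) ∧
      (∀ t ∉ Set.Icc (-1) 1, deriv h t + C * |h t| ≤ 0) ∧
      (t₁ ∉ Set.Icc (-1) 1 → deriv h t₁ + C * |h t₁| < 0) := by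
  rcases le_total 0 t₁ with hnonneg | hnonpos
  · rw [abs_of_nonneg hnonneg]
    exact exists_isTest_deriv_add_le_of_nonneg C hnonneg
  rw [abs_of_nonpos hnonpos]
  obtain ⟨h, hh, h_supp, h_le, h_lt⟩ :=
    exists_isTest_deriv_add_le_of_nonneg C (neg_nonneg.2 hnonpos)
  have hneg : ∀ t : ℝ, t ∉ Set.Icc (-1) 1 → -t ∉ Set.Icc (-1) 1 := fun t ht hmem =>
    ht ⟨by linarith [hmem.2], by linarith [hmem.1]⟩
  have hderiv : ∀ t, deriv (fun t => -h (-t)) t = deriv h (-t) := fun t => by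
    rw [deriv.fun_neg, deriv_comp_neg, neg_neg]
  refine ⟨fun t => -h (-t), ⟨(hh.contDiff.comp contDiff_neg).neg,
    (hh.hasCompactSupport.comp_homeomorph (Homeomorph.neg ℝ)).neg⟩, fun t ht => ?_, fun t ht => ?_,
    fun ht => ?_⟩
  · exact neg_eq_zero.2 (h_supp (-t) (by rwa [abs_neg]))
  · rw [hderiv, abs_neg]
    exact h_le (-t) (hneg t ht)
  · rw [hderiv, abs_neg]
    exact h_lt (hneg t₁ ht)

/-- The part of the gradient of `lift c h` that comes from the cutoff `tube c`. -/
def cutoffFlux (c : ℝ → Vec4) (h : ℝ → ℝ) (b : Fin 4) : Vec4 → ℝ :=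
  pd b (lift c h) - (Pi.single b 1 : Vec4) 0 • lift c (deriv h)

namespace IsTimeParametrized

variable {c : ℝ → Vec4}

lemma exists_forall_abs_sum_force_le (hc : IsTimeParametrized c) {G : Vec4 → Mat4}
    (hG : ∀ a b, Continuous fun p => G p a b) {κ : ℝ} (hκ : 0 ≤ κ) (R : ℝ) :
    ∃ C, ∀ T J, IsChargedMatter G κ T J → ∀ p : Vec4, |p 0| ≤ R → tube c p ≠ 0 →
      |∑ b, J p b * G p 0 b| ≤ C * T p 0 0 := by
  obtain ⟨K, hK, hmem⟩ := hc.exists_isCompact_forall_mem (isCompact_Icc (a := -R) (b := R))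
  obtain ⟨B, hB⟩ := hK.exists_bound_of_continuousOn (f := fun p => ∑ b, |G p 0 b|)
    (continuous_finsetSum _ fun b _ => (hG 0 b).abs).continuousOn
  refine ⟨7 * κ * B, fun T J hm p hp htube => ?_⟩
  calc |∑ b, J p b * G p 0 b| ≤ ∑ b, |J p b * G p 0 b| := Finset.abs_sum_le_sum_abs _ _
    _ ≤ ∑ b, 7 * κ * T p 0 0 * |G p 0 b| := Finset.sum_le_sum fun b _ => by
        rw [abs_mul]
        exact mul_le_mul_of_nonneg_right (hm.abs_current_le hκ b p) (abs_nonneg _)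
    _ = 7 * κ * T p 0 0 * ∑ b, |G p 0 b| := (Finset.mul_sum _ _ _).symm
    _ ≤ 7 * κ * T p 0 0 * B := mul_le_mul_of_nonneg_left
        ((le_abs_self _).trans (hB p (hmem p (abs_le.1 hp) htube)))
        (mul_nonneg (by positivity) (hm.energy_nonneg p))
    _ = 7 * κ * B * T p 0 0 := by ring

lemma isTest_cutoffFlux (hc : IsTimeParametrized c) {h : ℝ → ℝ} (hh : IsTest h) (b : Fin 4) :
    IsTest (cutoffFlux c h b) :=
  ((hc.isTest_lift hh).pd b).sub ((hc.isTest_lift hh.deriv).const_smul _)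

lemma disjoint_tsupport_cutoffFlux (hc : IsTimeParametrized c) {h : ℝ → ℝ} (hh : IsTest h)
    (b : Fin 4) : Disjoint (tsupport (cutoffFlux c h b)) (Set.range c) := by
  refine Set.disjoint_right.2 ?_
  rintro _ ⟨r, rfl⟩
  refine notMem_tsupport_iff_eventuallyEq.2 ?_
  filter_upwards [(hc.tube_eventuallyEq r).eventuallyEq_nhds] with p hp
  have htube : pd b (tube c) p = 0 := by simp [pd, hp.fderiv_eq]
  simp [cutoffFlux, hc.pd_lift (hh.contDiff.differentiable (by simp)), htube]

end IsTimeParametrized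

namespace IsChargedMatter

variable {G : Vec4 → Mat4} {κ : ℝ} {T : Vec4 → Mat4} {J : Vec4 → Vec4} {c : ℝ → Vec4} {C : ℝ}
  {h : ℝ → ℝ}

lemma energy_mul_lift_le (hm : IsChargedMatter G κ T J) {p : Vec4}
    (hC : lift c h p ≠ 0 → |∑ b, J p b * G p 0 b| ≤ C * T p 0 0) :
    T p 0 0 * lift c (-deriv h - C • |h|) p
      ≤ ∑ b, (T p 0 0 * |cutoffFlux c h b p|
        - (T p 0 b * pd b (lift c h) p + J p b * (G p 0 b * lift c h p))) := by
  have hflux : ∀ b, T p 0 b * cutoffFlux c h b p ≤ T p 0 0 * |cutoffFlux c h b p| := fun b => by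
    refine (le_abs_self _).trans ?_
    rw [abs_mul]
    exact mul_le_mul_of_nonneg_right ((hm.dec p).abs_apply_le 0 b) (abs_nonneg _)
  have hforce : (∑ b, J p b * G p 0 b) * lift c h p ≤ C * T p 0 0 * |lift c h p| := by
    by_cases hp : lift c h p = 0
    · simp [hp]
    refine le_trans ?_ (mul_le_mul_of_nonneg_right (hC hp) (abs_nonneg _))
    rw [← abs_mul]
    exact le_abs_self _
  have hlift : lift c (-deriv h - C • |h|) p = -lift c (deriv h) p - C * |lift c h p| := by
    simp only [lift_apply, Pi.sub_apply, Pi.neg_apply, Pi.smul_apply, Pi.abs_apply, smul_eq_mul,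
      abs_mul, abs_of_nonneg (tube_nonneg c p)]
    ring
  have hpd : ∑ b, T p 0 b * pd b (lift c h) p
      = (∑ b, T p 0 b * cutoffFlux c h b p) + T p 0 0 * lift c (deriv h) p := by
    simp [cutoffFlux, Fin.sum_univ_four]
    ring
  have hsum := Finset.sum_le_sum fun b (_ : b ∈ Finset.univ) => hflux b
  simp only [Finset.sum_add_distrib, Finset.sum_sub_distrib, ← mul_assoc, ← Finset.sum_mul]
    at hpd hsum ⊢
  rw [hlift, hpd]
  linear_combination hsum + hforce

lemma integral_energy_mul_lift_le (hm : IsChargedMatter G κ T J)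
    (hG : ∀ a b, ContDiff ℝ ∞ fun p => G p a b) (hc : IsTimeParametrized c) (hh : IsTest h)
    (hC : ∀ p, lift c h p ≠ 0 → |∑ b, J p b * G p 0 b| ≤ C * T p 0 0) :
    ∫ p, T p 0 0 * lift c (-deriv h - C • |h|) p
      ≤ ∑ b, ∫ p, T p 0 0 * |cutoffFlux c h b p| := by
  have hlift := hc.isTest_lift hh
  have hstress : ∀ b, Integrable fun p => T p 0 b * pd b (lift c h) p := fun b =>
    ((hlift.pd b).mul_left (hm.smooth 0 b)).integrable
  have hforce : ∀ b, Integrable fun p => J p b * (G p 0 b * lift c h p) := fun b =>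
    ((hlift.mul_left (hG 0 b)).mul_left (hm.smooth_current b)).integrable
  have hflux : ∀ b, Integrable fun p => T p 0 0 * |cutoffFlux c h b p| := fun b =>
    integrable_mul_of_hasCompactSupport (hm.continuous_stress 0 0)
      (hc.isTest_cutoffFlux hh b).continuous.abs (hc.isTest_cutoffFlux hh b).hasCompactSupport.abs
  have hsum : ∀ b, Integrable fun p => T p 0 0 * |cutoffFlux c h b p|
      - (T p 0 b * pd b (lift c h) p + J p b * (G p 0 b * lift c h p)) := fun b =>
    (hflux b).sub ((hstress b).add (hforce b))
  have henergy : Integrable fun p => T p 0 0 * lift c (-deriv h - C • |h|) p :=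
    integrable_mul_of_hasCompactSupport (hm.continuous_stress 0 0)
      (hc.continuous_lift ((hh.deriv.continuous.neg).sub (hh.continuous.abs.const_smul C)))
      (hc.hasCompactSupport_lift
        (hh.deriv.hasCompactSupport.neg.sub (hh.hasCompactSupport.abs.smul_left (f := fun _ => C))))
  refine (integral_mono henergy (integrable_finsetSum _ fun b _ => hsum b)
    fun p => hm.energy_mul_lift_le (hC p)).trans_eq ?_
  rw [integral_finsetSum _ fun b _ => hsum b]
  have hintegral : ∀ b, ∫ p, (T p 0 0 * |cutoffFlux c h b p|
      - (T p 0 b * pd b (lift c h) p + J p b * (G p 0 b * lift c h p)))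
      = (∫ p, T p 0 0 * |cutoffFlux c h b p|)
      - ((∫ p, T p 0 b * pd b (lift c h) p) + ∫ p, J p b * (G p 0 b * lift c h p)) := fun b =>
    (integral_sub (hflux b) ((hstress b).add (hforce b))).trans
      (congrArg (_ - ·) (integral_add (hstress b) (hforce b)))
  rw [Finset.sum_congr rfl fun b _ => hintegral b, Finset.sum_sub_distrib, Finset.sum_add_distrib,
    hm.sum_integral_stress_mul_pd hG hlift, sub_zero]

end IsChargedMatter

lemma exists_isTest_barrier {b : ℝ → ℝ} (hb0 : ∀ t, 0 ≤ b t)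
    (hb1 : ∀ t ∈ Set.Icc (-1) 1, b t = 1) (C t₁ : ℝ) :
    ∃ (h : ℝ → ℝ) (N : ℝ), IsTest h ∧ (∀ t, h t ≠ 0 → |t| ≤ |t₁| + 1) ∧
      (∀ t, 0 ≤ (N • b + (-deriv h - C • |h|)) t) ∧ 0 < (N • b + (-deriv h - C • |h|)) t₁ := by
  obtain ⟨h, hh, h_supp, h_le, h_lt⟩ := exists_isTest_deriv_add_le C t₁
  have hf : Continuous (-deriv h - C • |h|) :=
    hh.deriv.continuous.neg.sub (hh.continuous.abs.const_smul C)
  obtain ⟨M, hM⟩ := (isCompact_Icc (a := (-1 : ℝ)) (b := 1)).exists_bound_of_continuousOn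
    hf.continuousOn
  have hM0 : 0 ≤ M := (norm_nonneg _).trans (hM 0 (by simp))
  have h_inside : ∀ t ∈ Set.Icc (-1 : ℝ) 1, 0 < ((M + 1) • b + (-deriv h - C • |h|)) t :=
    fun t ht => by
      have := neg_le_of_abs_le (hM t ht)
      rw [Pi.add_apply, Pi.smul_apply, hb1 t ht, smul_eq_mul]
      linarith
  have h_outside : ∀ t, (-deriv h - C • |h|) t
      ≤ ((M + 1) • b + (-deriv h - C • |h|)) t := fun t =>
    le_add_of_nonneg_left (mul_nonneg (by linarith) (hb0 t))
  have h_apply : ∀ t, (-deriv h - C • |h|) t = -(deriv h t + C * |h t|) := fun t => by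
    simp only [Pi.sub_apply, Pi.neg_apply, Pi.smul_apply, Pi.abs_apply, smul_eq_mul]
    ring
  refine ⟨h, M + 1, hh, fun t ht => not_lt.1 fun hlt => ht (h_supp t hlt), fun t => ?_, ?_⟩
  · by_cases ht : t ∈ Set.Icc (-1) 1
    · exact (h_inside t ht).le
    · exact (neg_nonneg.2 (h_le t ht)).trans ((h_apply t).symm.trans_le (h_outside t))
  · by_cases ht : t₁ ∈ Set.Icc (-1) 1
    · exact h_inside t₁ ht
    · exact (neg_pos.2 (h_lt ht)).trans_le ((h_apply t₁).symm.trans_le (h_outside t₁))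

namespace IsConcentrating

variable {ι : Type*} {G : Vec4 → Mat4} {κ : ℝ} {c : ℝ → Vec4} {b : ℝ → ℝ} {𝒰 : Ultrafilter ι}
  {T : ι → Vec4 → Mat4} {J : ι → Vec4 → Vec4}

lemma exists_eventually_integral_lift_le (hconc : IsConcentrating G κ c (lift c b) 𝒰 T J)
    (hG : ∀ a b, ContDiff ℝ ∞ fun p => G p a b) (hκ : 0 ≤ κ) (hc : IsTimeParametrized c)
    (hb : IsTest b) (hb0 : ∀ t, 0 ≤ b t) (hb1 : ∀ t ∈ Set.Icc (-1) 1, b t = 1) (t₁ : ℝ) :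
    ∃ φ : ℝ → ℝ, Continuous φ ∧ HasCompactSupport φ ∧ (∀ t, 0 ≤ φ t) ∧ 0 < φ t₁ ∧
      ∃ M, ∀ᶠ i in 𝒰, ∫ p, T i p 0 0 * lift c φ p ≤ M := by
  obtain ⟨C, hC⟩ := hc.exists_forall_abs_sum_force_le (fun a b => (hG a b).continuous) hκ (|t₁| + 1)
  obtain ⟨h, N, hh, h_supp, h_nonneg, h_pos⟩ := exists_isTest_barrier hb0 hb1 C t₁
  have hf : Continuous (-deriv h - C • |h|) :=
    hh.deriv.continuous.neg.sub (hh.continuous.abs.const_smul C)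
  have hfc : HasCompactSupport (-deriv h - C • |h|) :=
    hh.deriv.hasCompactSupport.neg.sub (hh.hasCompactSupport.abs.smul_left (f := fun _ => C))
  refine ⟨N • b + (-deriv h - C • |h|), (hb.continuous.const_smul N).add hf,
    (hb.hasCompactSupport.smul_left (f := fun _ => N)).add hfc, h_nonneg, h_pos, N + 1, ?_⟩
  have hflux : Tendsto (fun i => ∑ a, ∫ p, T i p 0 0 * |cutoffFlux c h a p|) 𝒰 (𝓝 0) := by
    simpa using tendsto_finsetSum (Finset.univ : Finset (Fin 4)) fun a _ =>
      hconc.concentratesOn _ (hc.isTest_cutoffFlux hh a).continuous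
        (hc.isTest_cutoffFlux hh a).hasCompactSupport (hc.disjoint_tsupport_cutoffFlux hh a)
  filter_upwards [hflux.eventually_le_const one_pos] with i hi
  have hm := hconc.matter i
  have h_transport := hm.integral_energy_mul_lift_le hG hc hh (C := C) fun p hp =>
    hC _ _ hm p (h_supp _ (left_ne_zero_of_mul hp)) (right_ne_zero_of_mul hp)
  have hint : ∀ {φ : ℝ → ℝ}, Continuous φ → HasCompactSupport φ →
      Integrable fun p => T i p 0 0 * lift c φ p := fun hφ hφc =>
    integrable_mul_of_hasCompactSupport (hm.continuous_stress 0 0) (hc.continuous_lift hφ)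
      (hc.hasCompactSupport_lift hφc)
  calc ∫ p, T i p 0 0 * lift c (N • b + (-deriv h - C • |h|)) p
      = ∫ p, (N * (T i p 0 0 * lift c b p) + T i p 0 0 * lift c (-deriv h - C • |h|) p) := by
        congr 1 with p
        rw [map_add, map_smul, Pi.add_apply, Pi.smul_apply, smul_eq_mul]
        ring
    _ = N + ∫ p, T i p 0 0 * lift c (-deriv h - C • |h|) p := by
        rw [integral_add ((hint hb.continuous hb.hasCompactSupport).const_mul N) (hint hf hfc),
          integral_const_mul, hconc.normalized i, mul_one]
    _ ≤ N + 1 := by gcongr; exact h_transport.trans hi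

lemma locallyBoundedMass (hconc : IsConcentrating G κ c (lift c b) 𝒰 T J)
    (hG : ∀ a b, ContDiff ℝ ∞ fun p => G p a b) (hκ : 0 ≤ κ) (hc : IsTimeParametrized c)
    (hb : IsTest b) (hb0 : ∀ t, 0 ≤ b t) (hb1 : ∀ t ∈ Set.Icc (-1) 1, b t = 1) :
    LocallyBoundedMass volume 𝒰 (fun i p => T i p 0 0) := by
  refine locallyBoundedMass_of_forall_exists (fun i => (hconc.matter i).continuous_stress 0 0)
    (fun i => (hconc.matter i).energy_nonneg) fun p => ?_
  by_cases hp : p ∈ Set.range c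
  · obtain ⟨t₁, rfl⟩ := hp
    obtain ⟨φ, hφ, hφc, hφ0, hφ_pos, hM⟩ :=
      hconc.exists_eventually_integral_lift_le hG hκ hc hb hb0 hb1 t₁
    have hlift_pos : 0 < lift c φ (c t₁) := hφ_pos.trans_eq (congrFun (hc.lift_comp φ) t₁).symm
    exact ⟨lift c φ, hc.continuous_lift hφ, hc.hasCompactSupport_lift hφc, lift_nonneg c hφ0,
      hlift_pos, hM⟩
  · obtain ⟨χ, hχ, hχ_supp, hχ0, hχ1⟩ := exists_isTest_eq_one (isCompact_singleton (x := p))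
      hc.isClosed_range.isOpen_compl (Set.singleton_subset_iff.2 hp)
    refine ⟨χ, hχ.continuous, hχ.hasCompactSupport, hχ0, by simp [hχ1 p rfl], 1, ?_⟩
    have hlim := hconc.concentratesOn χ hχ.continuous hχ.hasCompactSupport
      (Set.disjoint_left.2 hχ_supp)
    simpa only [abs_of_nonneg (hχ0 _)] using hlim.eventually_le_const one_pos

end IsConcentrating

/-! ### The limit matter on the curve -/

lemma IsChargedMatter.abs_sum_integral_current_mul_le {G : Vec4 → Mat4} {κ : ℝ} {T : Vec4 → Mat4}
    {J : Vec4 → Vec4} (hm : IsChargedMatter G κ T J) {v : Vec4 → Vec4}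
    (hv : ∀ a, ContDiff ℝ ∞ fun p => v p a) (hv1 : ∀ p, UnitTimelike (v p)) {ψ : Vec4 → ℝ}
    (hψ : IsTest ψ) (hψ0 : ∀ p, 0 ≤ ψ p) :
    |∑ a, ∫ p, J p a * (v p a * ψ p)|
      ≤ κ * ∑ a, ∑ b, ∫ p, T p a b * (v p a * v p b * ψ p) := by
  have hcurrent : ∀ a, Integrable fun p => J p a * (v p a * ψ p) := fun a =>
    ((hψ.mul_left (hv a)).mul_left (hm.smooth_current a)).integrable
  have hstress : ∀ a b, Integrable fun p => T p a b * (v p a * v p b * ψ p) := fun a b =>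
    ((hψ.mul_left ((hv a).mul (hv b))).mul_left (hm.smooth a b)).integrable
  have hstress_sum : ∀ a, Integrable fun p => ∑ b, T p a b * (v p a * v p b * ψ p) := fun a =>
    integrable_finsetSum _ fun b _ => hstress a b
  simp only [← integral_finsetSum _ fun b _ => hstress _ b]
  rw [← integral_finsetSum _ fun a _ => hcurrent a, ← integral_finsetSum _ fun a _ => hstress_sum a,
    ← integral_const_mul, ← Real.norm_eq_abs]
  refine norm_integral_le_of_norm_le
    ((integrable_finsetSum _ fun a _ => hstress_sum a).const_mul κ) (.of_forall fun p => ?_)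
  calc ‖∑ a, J p a * (v p a * ψ p)‖ = |∑ a, J p a * v p a| * ψ p := by
        simp only [← mul_assoc, ← Finset.sum_mul, Real.norm_eq_abs, abs_mul, abs_of_nonneg (hψ0 p)]
    _ ≤ κ * (∑ a, ∑ b, T p a b * v p a * v p b) * ψ p :=
        mul_le_mul_of_nonneg_right (hm.bound p _ (hv1 p)) (hψ0 p)
    _ = κ * ∑ a, ∑ b, T p a b * (v p a * v p b * ψ p) := by
        simp only [Finset.sum_mul, mul_assoc]

/-- Charged matter living on the curve `c`: the stress `τ` and the current `j` pair with the
restrictions to the curve of test functions on spacetime. -/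
structure IsLineMatter (G : Vec4 → Mat4) (κ : ℝ) (c : ℝ → Vec4)
    (τ : Fin 4 → Fin 4 → (ℝ → ℝ) →ₗ[ℝ] ℝ) (j : Fin 4 → (ℝ → ℝ) →ₗ[ℝ] ℝ) : Prop where
  symm : ∀ a b φ, IsTest φ → τ a b φ = τ b a φ
  conserved : ∀ ψ : Vec4 → ℝ, IsTest ψ → ∑ b, j b (pd b ψ ∘ c) = 0
  force : ∀ ψ : Vec4 → ℝ, IsTest ψ → ∀ a,
    (∑ b, τ a b (pd b ψ ∘ c)) + ∑ b, j b (((fun p => G p a b) * ψ) ∘ c) = 0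
  bound : ∀ φ : ℝ → ℝ, IsTest φ → (∀ t, 0 ≤ φ t) → ∀ v : ℝ → Vec4, ContDiff ℝ ∞ v →
    (∀ t, UnitTimelike (v t)) → |∑ a, j a ((fun t => v t a) * φ)|
      ≤ κ * ∑ a, ∑ b, τ a b ((fun t => v t a * v t b) * φ)

lemma isLineMatter_of_tendsto {ι : Type*} {G : Vec4 → Mat4} {κ : ℝ} {c : ℝ → Vec4}
    {𝒰 : Ultrafilter ι} {T : ι → Vec4 → Mat4} {J : ι → Vec4 → Vec4}
    (hm : ∀ i, IsChargedMatter G κ (T i) (J i)) (hG : ∀ a b, ContDiff ℝ ∞ fun p => G p a b)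
    (hc : IsTimeParametrized c) {τ : Fin 4 → Fin 4 → (ℝ → ℝ) →ₗ[ℝ] ℝ}
    {j : Fin 4 → (ℝ → ℝ) →ₗ[ℝ] ℝ}
    (hτ : ∀ a b ψ, IsTest ψ → Tendsto (fun i => ∫ p, T i p a b * ψ p) 𝒰 (𝓝 (τ a b (ψ ∘ c))))
    (hj : ∀ a ψ, IsTest ψ → Tendsto (fun i => ∫ p, J i p a * ψ p) 𝒰 (𝓝 (j a (ψ ∘ c)))) :
    IsLineMatter G κ c τ j where
  symm a b φ hφ := by
    have ha := hτ a b _ (hc.isTest_lift hφ)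
    have hb := hτ b a _ (hc.isTest_lift hφ)
    simp only [fun i p => (IsSymm.apply ((hm i).symm p) a b).symm, hc.lift_comp] at ha hb
    exact tendsto_nhds_unique ha hb
  conserved ψ hψ := by
    refine tendsto_nhds_unique (tendsto_finsetSum _ fun b _ => hj b _ (hψ.pd b)) ?_
    simp only [(hm _).sum_integral_current_mul_pd hψ, tendsto_const_nhds]
  force ψ hψ a := by
    refine tendsto_nhds_unique ((tendsto_finsetSum _ fun b _ => hτ a b _ (hψ.pd b)).add
      (tendsto_finsetSum _ fun b _ => hj b _ (hψ.mul_left (hG a b)))) ?_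
    exact tendsto_const_nhds.congr fun i => ((hm i).sum_integral_stress_mul_pd hG hψ a).symm
  bound φ hφ hφ0 v hv hv1 := by
    have hva : ∀ a, ContDiff ℝ ∞ fun p : Vec4 => v (p 0) a := fun a =>
      (contDiff_pi.1 hv a).comp (contDiff_apply ℝ ℝ 0)
    have hlift := hc.isTest_lift hφ
    have hcomp : ∀ f : ℝ → ℝ, ((fun p : Vec4 => f (p 0)) * lift c φ) ∘ c = f * φ := fun f => by
      rw [Pi.mul_comp, hc.lift_comp]
      congr 1 with r
      exact congrArg f (hc.time r)
    have hj_lim := tendsto_finsetSum (Finset.univ : Finset (Fin 4)) fun a _ =>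
      hj a _ (hlift.mul_left (hva a))
    have hτ_lim := tendsto_finsetSum (Finset.univ : Finset (Fin 4)) fun a _ =>
      tendsto_finsetSum (Finset.univ : Finset (Fin 4)) fun b _ =>
        hτ a b _ (hlift.mul_left ((hva a).mul (hva b)))
    simp only [fun a => hcomp fun t => v t a, fun a b => hcomp fun t => v t a * v t b]
      at hj_lim hτ_lim
    exact le_of_tendsto_of_tendsto' hj_lim.abs (hτ_lim.const_mul κ) fun i =>
      (hm i).abs_sum_integral_current_mul_le hva (fun p => hv1 (p 0)) hlift
        fun p => lift_nonneg c hφ0 p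

lemma IsConcentrating.exists_isLineMatter {ι : Type*} {G : Vec4 → Mat4} {κ : ℝ} {c : ℝ → Vec4}
    {b : ℝ → ℝ} {𝒰 : Ultrafilter ι} {T : ι → Vec4 → Mat4} {J : ι → Vec4 → Vec4}
    (hconc : IsConcentrating G κ c (lift c b) 𝒰 T J)
    (hG : ∀ a b, ContDiff ℝ ∞ fun p => G p a b) (hκ : 0 ≤ κ) (hc : IsTimeParametrized c)
    (hb : IsTest b) (hb0 : ∀ t, 0 ≤ b t) (hb1 : ∀ t ∈ Set.Icc (-1) 1, b t = 1) :
    ∃ τ j, IsLineMatter G κ c τ j ∧ τ 0 0 b = 1 := by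
  have hm := hconc.matter
  have hbdd := hconc.locallyBoundedMass hG hκ hc hb hb0 hb1
  choose τ hτ using fun a b => hc.exists_weakLimit_comp zero_le_one
    (fun i => (hm i).continuous_stress a b) (fun i => (hm i).continuous_stress 0 0)
    (fun i => (hm i).abs_stress_le a b) (fun i => (hm i).energy_nonneg) hbdd hconc.concentratesOn
  choose j hj using fun a => hc.exists_weakLimit_comp (by positivity : 0 ≤ 7 * κ)
    (fun i => (hm i).continuous_current a) (fun i => (hm i).continuous_stress 0 0)
    (fun i => (hm i).abs_current_le hκ a) (fun i => (hm i).energy_nonneg) hbdd hconc.concentratesOn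
  refine ⟨τ, j, isLineMatter_of_tendsto hm hG hc hτ hj, ?_⟩
  have hlim := hτ 0 0 _ (hc.isTest_lift hb)
  simp only [hconc.normalized, hc.lift_comp] at hlim
  exact tendsto_nhds_unique hlim tendsto_const_nhds

/-! ### Mass, charge and the Lorentz force -/

/-- `u` is the four-velocity of the curve `c`, as a function of coordinate time. -/
structure IsFourVelocity (c u : ℝ → Vec4) : Prop where
  contDiff : ContDiff ℝ ∞ u
  unitTimelike : ∀ r, UnitTimelike (u r)
  smul_deriv : ∀ r, u r 0 • deriv c r = u r

namespace IsFourVelocity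

variable {c u : ℝ → Vec4}

lemma time_pos (hu : IsFourVelocity c u) (r : ℝ) : 0 < u r 0 := (hu.unitTimelike r).1.2

lemma contDiff_apply (hu : IsFourVelocity c u) (a : Fin 4) : ContDiff ℝ ∞ fun r => u r a :=
  contDiff_pi.1 hu.contDiff a

lemma contDiff_inv_time (hu : IsFourVelocity c u) : ContDiff ℝ ∞ fun r => (u r 0)⁻¹ :=
  (hu.contDiff_apply 0).inv fun r => (hu.time_pos r).ne'

lemma deriv_eq_smul (hu : IsFourVelocity c u) (r : ℝ) : deriv c r = (u r 0)⁻¹ • u r := by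
  rw [eq_inv_smul_iff₀ (hu.time_pos r).ne', hu.smul_deriv]

lemma contDiff_lower (hu : IsFourVelocity c u) : ContDiff ℝ ∞ fun r => E *ᵥ u r :=
  (LinearMap.toContinuousLinearMap (Matrix.mulVecLin E)).contDiff.comp hu.contDiff

lemma contDiff_lower_apply (hu : IsFourVelocity c u) (a : Fin 4) :
    ContDiff ℝ ∞ fun r => (E *ᵥ u r) a := contDiff_pi.1 hu.contDiff_lower a

lemma deriv_dotProduct_lower (hu : IsFourVelocity c u) (r : ℝ) :
    deriv c r ⬝ᵥ E *ᵥ u r = (u r 0)⁻¹ := by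
  rw [hu.deriv_eq_smul, smul_dotProduct, dotProduct_E_mulVec, (hu.unitTimelike r).2, smul_eq_mul,
    mul_one]

lemma deriv_lower_apply (hu : IsFourVelocity c u) (r : ℝ) (a : Fin 4) :
    deriv (fun r => (E *ᵥ u r) a) r = (E *ᵥ deriv u r) a := by
  have h := ((LinearMap.toContinuousLinearMap (Matrix.mulVecLin E)).hasFDerivAt.comp_hasDerivAt r
    (hu.contDiff.differentiable (by simp) r).hasDerivAt)
  exact (hasDerivAt_pi.1 h a).deriv

lemma deriv_dotProduct_deriv_lower (hu : IsFourVelocity c u) (r : ℝ) :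
    deriv c r ⬝ᵥ (fun a => deriv (fun r => (E *ᵥ u r) a) r) = 0 := by
  have hdiff : ∀ a, HasDerivAt (fun r => u r a) (deriv u r a) r :=
    hasDerivAt_pi.1 (hu.contDiff.differentiable (by simp) r).hasDerivAt
  have hmink := (((((hdiff 0).mul (hdiff 0)).sub ((hdiff 1).mul (hdiff 1))).sub
    ((hdiff 2).mul (hdiff 2))).sub ((hdiff 3).mul (hdiff 3))).unique
    ((hasDerivAt_const r (1 : ℝ)).congr_of_eventuallyEq
      (.of_forall fun r => (hu.unitTimelike r).2))
  simp only [hu.deriv_lower_apply]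
  rw [hu.deriv_eq_smul, smul_dotProduct, dotProduct_E_mulVec, mink, smul_eq_mul]
  linear_combination (u r 0)⁻¹ / 2 * hmink

lemma sum_deriv_mul_deriv_lower_mul (hu : IsFourVelocity c u) {φ : ℝ → ℝ}
    (hφ : Differentiable ℝ φ) :
    ∑ a, (fun r => deriv c r a) * deriv ((fun r => (E *ᵥ u r) a) * φ)
      = (fun r => (u r 0)⁻¹) * deriv φ := by
  ext r
  have hderiv : ∀ a, deriv ((fun r => (E *ᵥ u r) a) * φ) r
      = deriv (fun r => (E *ᵥ u r) a) r * φ r + (E *ᵥ u r) a * deriv φ r := fun a =>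
    deriv_mul ((hu.contDiff_lower_apply a).differentiable (by simp) r) (hφ r)
  have hlower_deriv := hu.deriv_dotProduct_deriv_lower r
  have hlower := hu.deriv_dotProduct_lower r
  rw [dotProduct] at hlower_deriv hlower
  simp only [Finset.sum_apply, Pi.mul_apply, hderiv, mul_add, Finset.sum_add_distrib, ← mul_assoc,
    ← Finset.sum_mul, hlower_deriv, hlower, zero_mul, zero_add]

lemma dotProduct_lower_eq_zero (hu : IsFourVelocity c u) {x : Vec4} {r : ℝ}
    (hx : x ⬝ᵥ E *ᵥ deriv c r = 0) : x ⬝ᵥ E *ᵥ u r = 0 := by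
  rw [← hu.smul_deriv r, mulVec_smul, dotProduct_smul, hx, smul_zero]

end IsFourVelocity

namespace IsLineMatter

variable {G : Vec4 → Mat4} {κ : ℝ} {c u : ℝ → Vec4} {τ : Fin 4 → Fin 4 → (ℝ → ℝ) →ₗ[ℝ] ℝ}
  {j : Fin 4 → (ℝ → ℝ) →ₗ[ℝ] ℝ} {φ : ℝ → ℝ}

/-- Test with `dev c · a * lift c φ`, which vanishes on the curve. -/
lemma current_eq (h : IsLineMatter G κ c τ j) (hc : IsTimeParametrized c) (hφ : IsTest φ)
    (a : Fin 4) : j a φ = j 0 ((fun r => deriv c r a) * φ) := by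
  have hlift := hc.isTest_lift hφ
  have hzero := h.conserved _ (hlift.mul_left (hc.contDiff_dev_apply a))
  simp only [hc.pd_dev_mul_comp (hlift.contDiff.differentiable (by simp)), hc.lift_comp, map_sub,
    map_smul, Finset.sum_sub_distrib] at hzero
  simpa [Pi.single_apply, sub_eq_zero] using hzero

lemma stress_row_eq (h : IsLineMatter G κ c τ j) (hc : IsTimeParametrized c) (hφ : IsTest φ)
    (a b : Fin 4) : τ a b φ = τ a 0 ((fun r => deriv c r b) * φ) := by
  have hlift := hc.isTest_lift hφ
  have hzero := h.force _ (hlift.mul_left (hc.contDiff_dev_apply b)) a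
  have hforce : ∀ k, ((fun p => G p a k) * ((fun p => dev c p b) * lift c φ)) ∘ c = 0 := fun k => by
    ext r
    simp [hc.dev_curve]
  simp only [hc.pd_dev_mul_comp (hlift.contDiff.differentiable (by simp)), hc.lift_comp, map_sub,
    map_smul, Finset.sum_sub_distrib, hforce, map_zero, Finset.sum_const_zero, add_zero] at hzero
  simpa [Pi.single_apply, sub_eq_zero] using hzero

lemma stress_eq (h : IsLineMatter G κ c τ j) (hc : IsTimeParametrized c) (hφ : IsTest φ)
    (a b : Fin 4) : τ a b φ = τ 0 0 ((fun r => deriv c r a * deriv c r b) * φ) := by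
  have hb : IsTest ((fun r => deriv c r b) * φ) := hφ.mul_left (hc.contDiff_deriv_apply b)
  rw [h.stress_row_eq hc hφ, h.symm _ _ _ hb, h.stress_row_eq hc hb, ← mul_assoc]
  rfl

lemma charge_deriv (h : IsLineMatter G κ c τ j) (hc : IsTimeParametrized c) (hφ : IsTest φ) :
    j 0 (deriv φ) = 0 := by
  have hzero := h.conserved _ (hc.isTest_lift hφ)
  simpa [hc.pd_lift_comp (hφ.contDiff.differentiable (by simp)), Fin.sum_univ_four] using hzero

lemma force_balance (h : IsLineMatter G κ c τ j) (hc : IsTimeParametrized c)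
    (hG : ∀ a b, ContDiff ℝ ∞ fun p => G p a b) (hφ : IsTest φ) (a : Fin 4) :
    τ 0 0 ((fun r => deriv c r a) * deriv φ)
      + j 0 ((fun r => (G (c r) *ᵥ deriv c r) a) * φ) = 0 := by
  have hGφ : ∀ b, ((fun p => G p a b) * lift c φ) ∘ c = (fun r => G (c r) a b) * φ := fun b => by
    rw [Pi.mul_comp, hc.lift_comp]
    rfl
  have hcurrent : ∀ b, j b (((fun p => G p a b) * lift c φ) ∘ c)
      = j 0 ((fun r => deriv c r b) * ((fun r => G (c r) a b) * φ)) := fun b =>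
    (congrArg (j b) (hGφ b)).trans
      (h.current_eq hc (hφ.mul_left ((hG a b).comp hc.contDiff)) b)
  have hsum : ∑ b, (fun r => deriv c r b) * ((fun r => G (c r) a b) * φ)
      = (fun r => (G (c r) *ᵥ deriv c r) a) * φ := by
    ext r
    simp [mulVec, dotProduct, Finset.sum_mul, mul_assoc, mul_left_comm]
  have hstress : ∑ b, τ a b (pd b (lift c φ) ∘ c) = τ a 0 (deriv φ) := by
    simp [hc.pd_lift_comp (hφ.contDiff.differentiable (by simp)), Fin.sum_univ_four]
  have hzero := h.force _ (hc.isTest_lift hφ) a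
  rw [hstress, h.symm _ _ _ hφ.deriv, h.stress_row_eq hc hφ.deriv] at hzero
  simpa only [hcurrent, ← map_sum, hsum] using hzero

/-- Contract the force balance with the lowered four-velocity. -/
lemma mass_deriv (h : IsLineMatter G κ c τ j) (hc : IsTimeParametrized c)
    (hG : ∀ a b, ContDiff ℝ ∞ fun p => G p a b) (hG0 : ∀ p x, G p *ᵥ x ⬝ᵥ E *ᵥ x = 0)
    (hu : IsFourVelocity c u) (hφ : IsTest φ) :
    τ 0 0 ((fun r => (u r 0)⁻¹) * deriv φ) = 0 := by
  have hbalance : ∀ a, τ 0 0 ((fun r => deriv c r a) * deriv ((fun r => (E *ᵥ u r) a) * φ))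
      + j 0 ((fun r => (G (c r) *ᵥ deriv c r) a) * ((fun r => (E *ᵥ u r) a) * φ)) = 0 := fun a =>
    h.force_balance hc hG (hφ.mul_left (hu.contDiff_lower_apply a)) a
  have hforce : ∑ a, (fun r => (G (c r) *ᵥ deriv c r) a) * ((fun r => (E *ᵥ u r) a) * φ) = 0 := by
    ext r
    have horth := hu.dotProduct_lower_eq_zero (hG0 (c r) (deriv c r))
    simp only [dotProduct, Fin.sum_univ_four] at horth
    simp only [Fin.sum_univ_four, Pi.add_apply, Pi.mul_apply, Pi.zero_apply]
    linear_combination φ r * horth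
  have hsum := Finset.sum_congr rfl fun a (_ : a ∈ Finset.univ) => hbalance a
  rwa [Finset.sum_add_distrib, ← map_sum, ← map_sum,
    hu.sum_deriv_mul_deriv_lower_mul (hφ.contDiff.differentiable (by simp)), hforce, map_zero,
    add_zero, Finset.sum_const_zero] at hsum

lemma exists_charge (h : IsLineMatter G κ c τ j) (hc : IsTimeParametrized c) :
    ∃ q, ∀ φ, IsTest φ → j 0 φ = q * ∫ r, φ r :=
  exists_eq_const_mul_integral _ fun _ => h.charge_deriv hc

lemma exists_mass (h : IsLineMatter G κ c τ j) (hc : IsTimeParametrized c)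
    (hG : ∀ a b, ContDiff ℝ ∞ fun p => G p a b) (hG0 : ∀ p x, G p *ᵥ x ⬝ᵥ E *ᵥ x = 0)
    (hu : IsFourVelocity c u) :
    ∃ m, ∀ φ, IsTest φ → τ 0 0 φ = m * ∫ r, u r 0 * φ r := by
  obtain ⟨m, hm⟩ := exists_eq_const_mul_integral
    (τ 0 0 ∘ₗ LinearMap.mulLeft ℝ (fun r => (u r 0)⁻¹)) fun φ => h.mass_deriv hc hG hG0 hu
  refine ⟨m, fun φ hφ => ?_⟩
  have hmφ := hm _ (hφ.mul_left (hu.contDiff_apply 0))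
  have hcancel : (fun r => (u r 0)⁻¹) * ((fun r => u r 0) * φ) = φ := by
    ext r
    exact inv_mul_cancel_left₀ (hu.time_pos r).ne' _
  rwa [LinearMap.comp_apply, LinearMap.mulLeft_apply, hcancel] at hmφ

lemma sum_current_lower (h : IsLineMatter G κ c τ j) (hc : IsTimeParametrized c)
    (hu : IsFourVelocity c u) (hφ : IsTest φ) :
    ∑ a, j a ((fun r => (E *ᵥ u r) a) * φ) = j 0 ((fun r => (u r 0)⁻¹) * φ) := by
  simp only [h.current_eq hc (hφ.mul_left (hu.contDiff_lower_apply _)), ← map_sum]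
  congr 1
  ext r
  have hlower := hu.deriv_dotProduct_lower r
  rw [dotProduct] at hlower
  simp only [Finset.sum_apply, Pi.mul_apply, ← mul_assoc, ← Finset.sum_mul, hlower]

lemma sum_stress_lower (h : IsLineMatter G κ c τ j) (hc : IsTimeParametrized c)
    (hu : IsFourVelocity c u) (hφ : IsTest φ) :
    ∑ a, ∑ b, τ a b ((fun r => (E *ᵥ u r) a * (E *ᵥ u r) b) * φ)
      = τ 0 0 ((fun r => (u r 0)⁻¹ * (u r 0)⁻¹) * φ) := by
  simp only [h.stress_eq hc
    (hφ.mul_left ((hu.contDiff_lower_apply _).mul (hu.contDiff_lower_apply _))), ← map_sum]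
  congr 1
  ext r
  have hlower := hu.deriv_dotProduct_lower r
  rw [dotProduct] at hlower
  simp only [Finset.sum_apply, Pi.mul_apply, ← mul_assoc, ← Finset.sum_mul, ← hlower,
    Finset.sum_mul_sum]
  simp only [mul_assoc, mul_left_comm]

lemma abs_charge_le (h : IsLineMatter G κ c τ j) (hc : IsTimeParametrized c)
    (hu : IsFourVelocity c u) {q m : ℝ} (hq : ∀ φ, IsTest φ → j 0 φ = q * ∫ r, φ r)
    (hm : ∀ φ, IsTest φ → τ 0 0 φ = m * ∫ r, u r 0 * φ r) : |q| ≤ κ * m := by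
  let b : ContDiffBump (0 : ℝ) := default
  have hb : IsTest b := ⟨b.contDiff, b.hasCompactSupport⟩
  have hφ : IsTest ((fun r => u r 0) * ⇑b) := hb.mul_left (hu.contDiff_apply 0)
  have hbound := h.bound _ hφ (fun r => mul_nonneg (hu.time_pos r).le b.nonneg) _ hu.contDiff_lower
    fun r => (hu.unitTimelike r).E_mulVec
  have htime : ∀ r, u r 0 ≠ 0 := fun r => (hu.time_pos r).ne'
  have hinv := hu.contDiff_inv_time
  rw [h.sum_current_lower hc hu hφ, h.sum_stress_lower hc hu hφ, hq _ (hφ.mul_left hinv),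
    hm _ (hφ.mul_left (hinv.mul hinv))] at hbound
  simp only [Pi.mul_apply, inv_mul_cancel_left₀ (htime _), mul_assoc,
    mul_inv_cancel_left₀ (htime _)] at hbound
  rw [abs_mul, abs_of_pos b.integral_pos, ← mul_assoc] at hbound
  exact le_of_mul_le_mul_right hbound b.integral_pos

lemma mass_smul_deriv (h : IsLineMatter G κ c τ j) (hc : IsTimeParametrized c)
    (hG : ∀ a b, ContDiff ℝ ∞ fun p => G p a b) (hu : IsFourVelocity c u) {q m : ℝ}
    (hq : ∀ φ, IsTest φ → j 0 φ = q * ∫ r, φ r)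
    (hm : ∀ φ, IsTest φ → τ 0 0 φ = m * ∫ r, u r 0 * φ r) (r : ℝ) :
    m • deriv u r = q • (G (c r) *ᵥ deriv c r) := by
  ext a
  have hforce : ContDiff ℝ ∞ fun r => (G (c r) *ᵥ deriv c r) a := by
    simp only [mulVec, dotProduct]
    exact ContDiff.sum fun b _ => ((hG a b).comp hc.contDiff).mul (hc.contDiff_deriv_apply b)
  have hua := (hu.contDiff_apply a).differentiable (by simp)
  have hlaw := deriv_eq_of_forall_integral_eq_zero (u := fun r => m * u r a)
    (g := fun r => q * (G (c r) *ᵥ deriv c r) a)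
    (contDiff_const.mul ((hu.contDiff_apply a).of_le (by simp)))
    (continuous_const.mul hforce.continuous) fun φ hφ => ?_
  · have ha := congrFun hlaw r
    rw [deriv_const_mul _ (hua r)] at ha
    rwa [Pi.smul_apply, Pi.smul_apply, smul_eq_mul, smul_eq_mul,
      deriv_pi fun b => (hu.contDiff_apply b).differentiable (by simp) r]
  have huw : ∀ r, u r 0 * (deriv c r a * deriv φ r) = u r a * deriv φ r := fun r => by
    rw [← mul_assoc, ← smul_eq_mul (u r 0), ← Pi.smul_apply, hu.smul_deriv]
  have hbalance := h.force_balance hc hG hφ a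
  rw [hm _ (hφ.deriv.mul_left (hc.contDiff_deriv_apply a)), hq _ (hφ.mul_left hforce)] at hbalance
  simp only [Pi.mul_apply, huw] at hbalance
  have hint_mass : Integrable fun t => m * (u t a * deriv φ t) :=
    (hφ.deriv.mul_left (hu.contDiff_apply a)).integrable.const_mul m
  have hint_charge : Integrable fun t => q * ((G (c t) *ᵥ deriv c t) a * φ t) :=
    (hφ.mul_left hforce).integrable.const_mul q
  simp only [mul_assoc]
  rw [integral_add hint_mass hint_charge, integral_const_mul, integral_const_mul, hbalance]

lemma exists_lorentz_force (h : IsLineMatter G κ c τ j) (hc : IsTimeParametrized c)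
    (hG : ∀ a b, ContDiff ℝ ∞ fun p => G p a b) (hG0 : ∀ p x, G p *ᵥ x ⬝ᵥ E *ᵥ x = 0)
    (hu : IsFourVelocity c u) (hφ : IsTest φ) (hφ0 : ∀ r, 0 ≤ φ r) (hτ : 0 < τ 0 0 φ) :
    ∃ κ' : ℝ, |κ'| ≤ κ ∧ ∀ r, deriv u r = κ' • (G (c r) *ᵥ deriv c r) := by
  obtain ⟨q, hq⟩ := h.exists_charge hc
  obtain ⟨m, hm⟩ := h.exists_mass hc hG hG0 hu
  have hm_pos : 0 < m := by
    rw [hm φ hφ] at hτ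
    exact pos_of_mul_pos_left hτ (integral_nonneg fun r => mul_nonneg (hu.time_pos r).le (hφ0 r))
  refine ⟨q / m, ?_, fun r => ?_⟩
  · rw [abs_div, abs_of_pos hm_pos, div_le_iff₀ hm_pos]
    exact h.abs_charge_le hc hu hq hm
  · rw [div_eq_inv_mul, mul_smul, ← h.mass_smul_deriv hc hG hu hq hm, inv_smul_smul₀ hm_pos.ne']

end IsLineMatter

/-! ### Reparametrisation by coordinate time -/

lemma exists_contDiff_inverse {f : ℝ → ℝ} (hf : ContDiff ℝ ∞ f) (h : ∀ t, 1 ≤ deriv f t) :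
    ∃ s : ℝ → ℝ, ContDiff ℝ ∞ s ∧ Function.LeftInverse s f ∧ Function.RightInverse s f := by
  have hderiv : ∀ t, HasDerivAt f (deriv f t) t := fun t =>
    (hf.differentiable (by simp) t).hasDerivAt
  have hmono : Monotone (f - id) :=
    monotone_of_deriv_nonneg (hf.differentiable (by simp) |>.sub differentiable_id) fun t => by
      rw [((hderiv t).sub (hasDerivAt_id t)).deriv]
      linarith [h t]
  have htop : Tendsto f atTop atTop := by
    refine tendsto_atTop_mono' _ ?_ (tendsto_atTop_add_const_left _ (f 0) tendsto_id)
    filter_upwards [eventually_ge_atTop 0] with t ht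
    simpa [le_sub_iff_add_le] using hmono ht
  have hbot : Tendsto f atBot atBot := by
    refine tendsto_atBot_mono' _ ?_ (tendsto_atBot_add_const_left _ (f 0) tendsto_id)
    filter_upwards [eventually_le_atBot 0] with t ht
    simpa [sub_le_iff_le_add] using hmono ht
  have hstrict : StrictMono f := by
    simpa using hmono.add_strictMono strictMono_id
  let e : ℝ ≃ₜ ℝ :=
    (hstrict.orderIsoOfSurjective f (hf.continuous.surjective htop hbot)).toHomeomorph
  exact ⟨e.symm, e.contDiff_symm_deriv (fun t => (one_pos.trans_le (h t)).ne') hderiv hf,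
    e.symm_apply_apply, e.apply_symm_apply⟩

lemma UnitTimelike.one_le_time {x : Vec4} (hx : UnitTimelike x) : 1 ≤ x 0 := by
  obtain ⟨⟨-, hpos⟩, hunit⟩ := hx
  rw [mink] at hunit
  nlinarith [sq_nonneg (x 1), sq_nonneg (x 2), sq_nonneg (x 3)]

section Reparametrisation

variable {γ : ℝ → Vec4} {s : ℝ → ℝ}

lemma hasDerivAt_time (hγ : ContDiff ℝ ∞ γ) (t : ℝ) :
    HasDerivAt (fun t => γ t 0) (deriv γ t 0) t :=
  hasDerivAt_pi.1 (hγ.differentiable (by simp) t).hasDerivAt 0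

lemma exists_coordinateTime (hγ : ContDiff ℝ ∞ γ) (hunit : ∀ t, UnitTimelike (deriv γ t)) :
    ∃ s : ℝ → ℝ, ContDiff ℝ ∞ s ∧ Function.LeftInverse s (fun t => γ t 0) ∧
      Function.RightInverse s (fun t => γ t 0) :=
  exists_contDiff_inverse (contDiff_pi.1 hγ 0) fun t => by
    rw [(hasDerivAt_time hγ t).deriv]
    exact (hunit t).one_le_time

lemma isFourVelocity_comp (hγ : ContDiff ℝ ∞ γ) (hunit : ∀ t, UnitTimelike (deriv γ t))
    (hs : ContDiff ℝ ∞ s) (hright : Function.RightInverse s fun t => γ t 0) :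
    IsFourVelocity (γ ∘ s) (deriv γ ∘ s) where
  contDiff := (contDiff_infty_iff_deriv.1 hγ).2.comp hs
  unitTimelike r := hunit (s r)
  smul_deriv r := by
    have hs' : HasDerivAt s (deriv s r) r := (hs.differentiable (by simp) r).hasDerivAt
    have hrate : deriv γ (s r) 0 * deriv s r = 1 :=
      ((hasDerivAt_time hγ (s r)).comp r hs').unique
        ((hasDerivAt_id r).congr_of_eventuallyEq (.of_forall hright))
    rw [((hγ.differentiable (by simp) (s r)).hasDerivAt.scomp r hs').deriv, smul_smul,
      Function.comp_apply, hrate, one_smul]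

lemma deriv_deriv_eq_smul (hγ : ContDiff ℝ ∞ γ) (hs : ContDiff ℝ ∞ s)
    (hleft : Function.LeftInverse s fun t => γ t 0) (t : ℝ) :
    deriv (deriv γ) t = deriv γ t 0 • deriv (deriv γ ∘ s) (γ t 0) := by
  have hγ' : ContDiff ℝ ∞ (deriv γ ∘ s) := (contDiff_infty_iff_deriv.1 hγ).2.comp hs
  rw [← ((hγ'.differentiable (by simp) _).hasDerivAt.scomp t (hasDerivAt_time hγ t)).deriv]
  congr 1
  ext r : 1
  exact congrArg (deriv γ) (hleft r).symm

end Reparametrisation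

lemma Tracks.exists_lorentz_force {G : Vec4 → Mat4} {κ : ℝ}
    {𝒞 : Set ((Vec4 → Mat4) × (Vec4 → Vec4))} (hmatter : ∀ TJ ∈ 𝒞, IsChargedMatter G κ TJ.1 TJ.2)
    {c u : ℝ → Vec4} (h : Tracks (Prod.fst '' 𝒞) c) (hc : IsTimeParametrized c)
    (hu : IsFourVelocity c u) (hκ : 0 ≤ κ) (hG : ∀ a b, ContDiff ℝ ∞ fun p => G p a b)
    (hG0 : ∀ p x, G p *ᵥ x ⬝ᵥ E *ᵥ x = 0) :
    ∃ κ' : ℝ, |κ'| ≤ κ ∧ ∀ r, deriv u r = κ' • (G (c r) *ᵥ deriv c r) := by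
  obtain ⟨b, hb, -, hb0, hb1⟩ := exists_isTest_eq_one (isCompact_Icc (a := (-1 : ℝ)) (b := 1))
    isOpen_univ (Set.subset_univ _)
  have hpos : 0 < lift c b (c 0) := by
    rw [← Function.comp_apply (f := lift c b), hc.lift_comp, hb1 0 (by simp)]
    exact one_pos
  obtain ⟨ι, 𝒰, T, J, hconc⟩ := h.exists_isConcentrating hmatter hc (hc.isTest_lift hb)
    (lift_nonneg c hb0) hpos
  obtain ⟨τ, j, hline, hτ⟩ := hconc.exists_isLineMatter hG hκ hc hb hb0 hb1
  exact hline.exists_lorentz_force hc hG hG0 hu hb hb0 (hτ ▸ one_pos)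

/-- Tracked charged curves obey the Lorentz force law. -/
theorem charged_tracking_lorentz_force (F : Vec4 → Mat4)
    (hFs : ∀ a b : Fin 4, ContDiff ℝ (⊤ : ℕ∞) fun p => F p a b)
    (hFa : ∀ p, (F p)ᵀ = -(F p))
    (γ : ℝ → Vec4) (hγ : ContDiff ℝ (⊤ : ℕ∞) γ)
    (hunit : ∀ t : ℝ, mink (deriv γ t) (deriv γ t) = 1)
    (htl : ∀ t : ℝ, FutureTimelike (deriv γ t))
    (κ : ℝ) (hκ : 0 ≤ κ)
    (C : Set ((Vec4 → Mat4) × (Vec4 → Vec4)))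
    (hC : ∀ TJ ∈ C, SmoothMatField TJ.1 ∧ SymValued TJ.1 ∧ (∀ p, DEC (TJ.1 p)) ∧
      (∀ a : Fin 4, ContDiff ℝ (⊤ : ℕ∞) fun p => TJ.2 p a) ∧
      (∀ p, ∑ a, pd a (fun q => TJ.2 q a) p = 0) ∧
      (∀ p (a : Fin 4), ∑ b, pd b (fun q => TJ.1 q a b) p = ∑ b, (E * F p) a b * TJ.2 p b) ∧
      (∀ p (t : Vec4), UnitTimelike t →
        |∑ a, TJ.2 p a * t a| ≤ κ * ∑ a, ∑ b, TJ.1 p a b * t a * t b))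
    (htr : Tracks (Prod.fst '' C) γ) :
    ∃ κ' : ℝ, |κ'| ≤ κ ∧
      ∀ (t : ℝ) (a : Fin 4),
        deriv (deriv γ) t a = κ' * ∑ b, (E * F (γ t)) a b * deriv γ t b := by
  have hv : ∀ t, UnitTimelike (deriv γ t) := fun t => ⟨htl t, hunit t⟩
  obtain ⟨s, hs, hleft, hright⟩ := exists_coordinateTime hγ hv
  have hc : IsTimeParametrized (γ ∘ s) := ⟨hγ.comp hs, hright⟩
  have hu : IsFourVelocity (γ ∘ s) (deriv γ ∘ s) := isFourVelocity_comp hγ hv hs hright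
  have hmatter : ∀ TJ ∈ C, IsChargedMatter (fun p => E * F p) κ TJ.1 TJ.2 := fun TJ hTJ =>
    let ⟨hT, hsymm, hdec, hJ, hcons, hforce, hbound⟩ := hC TJ hTJ
    ⟨hT, hsymm, hdec, hJ, hcons, hforce, hbound⟩
  have hEF : ∀ a b, ContDiff ℝ ∞ fun p => (E * F p) a b := fun a b => by
    simp only [E, diagonal_mul]
    exact contDiff_const.mul (hFs a b)
  obtain ⟨κ', hκ', hlaw⟩ := (htr.comp hleft.surjective).exists_lorentz_force hmatter hc hu hκ hEF
    fun p => lorentz_dotProduct_E_mulVec (hFa p)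
  refine ⟨κ', hκ', fun t a => ?_⟩
  have hut := hu.smul_deriv (γ t 0)
  simp only [Function.comp_apply, hleft t] at hut
  rw [deriv_deriv_eq_smul hγ hs hleft, hlaw, smul_comm, ← mulVec_smul, Function.comp_apply, hleft t,
    hut]
  rfl
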